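/- arXiv:1511.06872 — 6 statements merged into one kernel-verified Lean document; each statement's English description precedes it below -/
import Mathlib

section
/- Let G_xy be a parented a-graph belonging to A* and let c be a non-solution state of G_xy, say with c(x) = c(y) = 1. Then for each color k ∈ {2, 3, 4} there exists a path between x and y in G_xy all of whose vertices are colored 1 or k; that is, there exist 2-color paths between x and y for all three color-pairings that include the common color of x and y. -/
open SimpleGraph

/-- A proper vertex-coloring of `G` using at most 4 colors. -/
def IsProper4Coloring {V : Type} (G : SimpleGraph V) (c : V → Fin 4) : Prop :=
  ∀ a b : V, G.Adj a b → c a ≠ c b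

/-- The degree of a vertex, as the number of its neighbours. -/
noncomputable def vdeg {V : Type} (G : SimpleGraph V) (w : V) : ℕ :=
  (G.neighborSet w).ncard

/-- A (combinatorial) planar triangulation: a connected simple graph together with its
set of triangular faces, every edge lying on exactly two faces, satisfying Euler's
formula `v - e + f = 2`. -/
structure PlanarTriangulation (V : Type) [Fintype V] [DecidableEq V] where
  graph : SimpleGraph V
  connected : graph.Connected
  faces : Finset (Finset V)
  faces_card : ∀ f ∈ faces, f.card = 3
  faces_adj : ∀ f ∈ faces, ∀ a ∈ f, ∀ b ∈ f, a ≠ b → graph.Adj a b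
  edge_faces : ∀ a b : V, graph.Adj a b →
    (faces.filter fun f => a ∈ f ∧ b ∈ f).card = 2
  euler : (Fintype.card V : ℤ) - (graph.edgeSet.ncard : ℤ) + (faces.card : ℤ) = 2

/-- An a-graph: a near-triangulation of the plane whose unique non-triangular face is a
4-face with boundary cycle `u x v y`, the pairs `(x,y)` and `(u,v)` being the two pairs
of opposite (non-adjacent) boundary vertices.  All other faces are triangles, every
edge lies on exactly two faces (boundary edges lie on one triangle and the 4-face), and
Euler's formula holds. -/
structure AGraph (V : Type) [Fintype V] [DecidableEq V] where
  graph : SimpleGraph V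
  connected : graph.Connected
  u : V
  x : V
  v : V
  y : V
  adj_ux : graph.Adj u x
  adj_xv : graph.Adj x v
  adj_vy : graph.Adj v y
  adj_yu : graph.Adj y u
  not_adj_xy : ¬ graph.Adj x y
  not_adj_uv : ¬ graph.Adj u v
  x_ne_y : x ≠ y
  u_ne_v : u ≠ v
  faces : Finset (Finset V)
  faces_card : ∀ f ∈ faces, f.card = 3
  faces_adj : ∀ f ∈ faces, ∀ a ∈ f, ∀ b ∈ f, a ≠ b → graph.Adj a b
  edge_faces : ∀ a b : V, graph.Adj a b →
    (faces.filter fun f => a ∈ f ∧ b ∈ f).card =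
      (if ({a, b} : Finset V) ∈ ({{u, x}, {x, v}, {v, y}, {y, u}} : Finset (Finset V))
        then 1 else 2)
  euler : (Fintype.card V : ℤ) - (graph.edgeSet.ncard : ℤ) + ((faces.card : ℤ) + 1) = 2

/-- A parented a-graph `G_xy` is an a-graph counterexample if in every proper
4-coloring the designated opposite boundary vertices `x` and `y` get the same color. -/
def IsACounterexample {V : Type} [Fintype V] [DecidableEq V] (G : AGraph V) : Prop :=
  ∀ c : V → Fin 4, IsProper4Coloring G.graph c → c G.x = c G.y

/-- A minimal a-graph counterexample: an a-graph counterexample such that no a-graph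
counterexample has fewer vertices. -/
def IsMinimalACounterexample {V : Type} [Fintype V] [DecidableEq V] (G : AGraph V) : Prop :=
  IsACounterexample G ∧
    ∀ (W : Type) [Fintype W] [DecidableEq W] (H : AGraph W),
      IsACounterexample H → Fintype.card V ≤ Fintype.card W

/-- A minimal counterexample to the 4-color conjecture: a planar triangulation with no
proper 4-coloring such that every planar triangulation of lower order has one. -/
def IsMinimal4CTCounterexample {V : Type} [Fintype V] [DecidableEq V]
    (T : PlanarTriangulation V) : Prop :=
  (¬ ∃ c : V → Fin 4, IsProper4Coloring T.graph c) ∧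
    ∀ (W : Type) [Fintype W] [DecidableEq W] (S : PlanarTriangulation W),
      Fintype.card W < Fintype.card V → ∃ c : W → Fin 4, IsProper4Coloring S.graph c

/-- `b` can be reached from `a` by a walk of `G` all of whose vertices lie in `S`. -/
def ReachableWithin {V : Type} (G : SimpleGraph V) (S : Set V) (a b : V) : Prop :=
  ∃ p : G.Walk a b, ∀ w ∈ p.support, w ∈ S

/-- Removing the vertex set `S` from `G` leaves a disconnected graph. -/
def RemovalDisconnects {V : Type} (G : SimpleGraph V) (S : Set V) : Prop :=
  ∃ a b : V, a ∉ S ∧ b ∉ S ∧ ¬ ReachableWithin G Sᶜ a b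

/-- `G` has a separating cycle of length `n`. -/
def HasSeparatingCycle {V : Type} (G : SimpleGraph V) (n : ℕ) : Prop :=
  ∃ (a : V) (p : G.Walk a a), p.IsCycle ∧ p.length = n ∧
    RemovalDisconnects G {w | w ∈ p.support}

/-- A planar triangulation is internally 6-connected if it has minimum degree 5, no
separating 3-cycles or 4-cycles, and whenever a separating 5-cycle is removed, at least
one of the resulting components consists of a single vertex. -/
def Internally6Connected {V : Type} [Fintype V] [DecidableEq V]
    (T : PlanarTriangulation V) : Prop :=
  (∀ w : V, 5 ≤ vdeg T.graph w) ∧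
  ¬ HasSeparatingCycle T.graph 3 ∧
  ¬ HasSeparatingCycle T.graph 4 ∧
  ∀ (a : V) (p : T.graph.Walk a a), p.IsCycle → p.length = 5 →
    RemovalDisconnects T.graph {w | w ∈ p.support} →
    ∃ z : V, z ∉ p.support ∧
      ∀ b : V, b ∉ p.support → ReachableWithin T.graph {w | w ∉ p.support} z b → b = z

/-- The graph of the parent triangulation `G + xy` of an a-graph `G`. -/
def parentXYGraph {V : Type} [Fintype V] [DecidableEq V] (G : AGraph V) : SimpleGraph V :=
  G.graph ⊔ SimpleGraph.fromEdgeSet {s(G.x, G.y)}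

/-- The graph of the parent triangulation `G + uv` of an a-graph `G`. -/
def parentUVGraph {V : Type} [Fintype V] [DecidableEq V] (G : AGraph V) : SimpleGraph V :=
  G.graph ⊔ SimpleGraph.fromEdgeSet {s(G.u, G.v)}

/-- An a-graph is internally 6a-connected if at least one of its two parent
triangulations is internally 6-connected. -/
def Internally6aConnected {V : Type} [Fintype V] [DecidableEq V] (G : AGraph V) : Prop :=
  ∃ T : PlanarTriangulation V,
    (T.graph = parentXYGraph G ∨ T.graph = parentUVGraph G) ∧ Internally6Connected T

/-- A single Kempe exchange: for some pair of distinct colors `j`, `k`, the colors `j`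
and `k` are swapped on a non-empty proper subset of the `j`-`k` Kempe chains (a
non-empty union `U` of connected components of the subgraph induced by the vertices
colored `j` or `k`, with `U` not all of them), all other vertices keeping their color. -/
def KempeStep {V : Type} (G : SimpleGraph V) (c c' : V → Fin 4) : Prop :=
  ∃ j k : Fin 4, j ≠ k ∧ ∃ U : Set V,
    U.Nonempty ∧
    U ⊆ {w | c w = j ∨ c w = k} ∧
    U ≠ {w | c w = j ∨ c w = k} ∧
    (∀ a ∈ U, ∀ b : V, ReachableWithin G {w | c w = j ∨ c w = k} a b → b ∈ U) ∧
    (∀ w ∈ U, c' w = if c w = j then k else j) ∧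
    (∀ w : V, w ∉ U → c' w = c w)

/-- The equivalence relation on colorings generated by Kempe exchanges. -/
def KempeEquiv {V : Type} (G : SimpleGraph V) : (V → Fin 4) → (V → Fin 4) → Prop :=
  Relation.EqvGen (KempeStep G)

/-- For designated vertices `x`, `y`: no Kempe equivalence class of proper 4-colorings
contains both a non-solution state (`c x = c y`) and a solution state (`c x ≠ c y`).
This is the defining property of the family `A*`. -/
def NoNSClass {V : Type} (G : SimpleGraph V) (x y : V) : Prop :=
  ∀ c c' : V → Fin 4, IsProper4Coloring G c → IsProper4Coloring G c' →
    KempeEquiv G c c' → (c x = c y ↔ c' x = c' y)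

/-- The coloring state determined by a coloring: the induced partition of the vertex
set into color classes, recorded as the relation of having equal colors.  Two colorings
represent the same state precisely when they have the same `statePart`. -/
def statePart {V : Type} (c : V → Fin 4) : V → V → Prop :=
  fun a b => c a = c b

/-- The four boundary vertices of an a-graph. -/
def boundaryFinset {V : Type} [Fintype V] [DecidableEq V] (G : AGraph V) : Finset V :=
  {G.u, G.x, G.v, G.y}

/-- The interior vertices of an a-graph: those not on the boundary 4-cycle. -/
def interiorFinset {V : Type} [Fintype V] [DecidableEq V] (G : AGraph V) : Finset V :=
  Finset.univ \ boundaryFinset G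

open Classical in
/-- The inner ring of an a-graph: the interior vertices adjacent to some boundary
vertex. -/
noncomputable def innerRingFinset {V : Type} [Fintype V] [DecidableEq V]
    (G : AGraph V) : Finset V :=
  (interiorFinset G).filter fun w => ∃ b ∈ boundaryFinset G, G.graph.Adj w b

/-- `G` belongs to the family `G(m,n)`: its inner ring has order `n` and encloses `m`
further interior vertices. -/
def InFamilyG {V : Type} [Fintype V] [DecidableEq V] (G : AGraph V) (m n : ℕ) : Prop :=
  (innerRingFinset G).card = n ∧ (interiorFinset G \ innerRingFinset G).card = m

/-- The icosahedron, the unique 5-regular planar triangulation, on 12 vertices. -/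
def icosG : SimpleGraph (Fin 12) :=
  SimpleGraph.fromEdgeSet
    {s(0, 1), s(0, 2), s(0, 3), s(0, 4), s(0, 5),
     s(1, 2), s(2, 3), s(3, 4), s(4, 5), s(5, 1),
     s(11, 6), s(11, 7), s(11, 8), s(11, 9), s(11, 10),
     s(6, 7), s(7, 8), s(8, 9), s(9, 10), s(10, 6),
     s(1, 6), s(1, 10), s(2, 6), s(2, 7), s(3, 7),
     s(3, 8), s(4, 8), s(4, 9), s(5, 9), s(5, 10)}

/-- The order-12 a-graph `G*`: the icosahedron with the edge `uv = {0,1}` deleted.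
Its boundary 4-cycle is `u x v y = 0 2 1 5`, so `(x, y) = (2, 5)` and
`(u, v) = (0, 1)` are the two pairs of opposite boundary vertices. -/
def gstarG : SimpleGraph (Fin 12) := icosG.deleteEdges {s(0, 1)}

/-- The boundary vertex `u` of `G*`. -/
def gstarU : Fin 12 := 0
/-- The boundary vertex `v` of `G*`. -/
def gstarV : Fin 12 := 1
/-- The boundary vertex `x` of `G*`. -/
def gstarX : Fin 12 := 2
/-- The boundary vertex `y` of `G*`. -/
def gstarY : Fin 12 := 5

/-- For `G_xy ∈ A*` and a non-solution state `c` (with `c x = c y`), for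
each color `k` different from the common color of `x` and `y` there is a path between
`x` and `y` all of whose vertices are colored with the common color or `k`. -/
theorem stmt_4 {V : Type} [Fintype V] [DecidableEq V] (G : AGraph V)
    (hA : NoNSClass G.graph G.x G.y) (c : V → Fin 4)
    (hc : IsProper4Coloring G.graph c) (hns : c G.x = c G.y) :
    ∀ k : Fin 4, k ≠ c G.x →
      ∃ p : G.graph.Walk G.x G.y, ∀ w ∈ p.support, c w = c G.x ∨ c w = k := by
  intro k hk
  by_contra hno
  have hxx : ReachableWithin G.graph {w | c w = c G.x ∨ c w = k} G.x G.x :=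
    ⟨Walk.nil, by simp⟩
  have htr : ∀ a b d : V, ReachableWithin G.graph {w | c w = c G.x ∨ c w = k} a b →
      ReachableWithin G.graph {w | c w = c G.x ∨ c w = k} b d →
      ReachableWithin G.graph {w | c w = c G.x ∨ c w = k} a d := by
    rintro a b d ⟨p, hp⟩ ⟨q, hq⟩
    refine ⟨p.append q, fun w hw => ?_⟩
    rcases (Walk.mem_support_append_iff p q).1 hw with h | h
    · exact hp w h
    · exact hq w h
  have hy : ¬ ReachableWithin G.graph {w | c w = c G.x ∨ c w = k} G.x G.y := fun h => hno h
  have hmem : ∀ a : V, ReachableWithin G.graph {w | c w = c G.x ∨ c w = k} G.x a →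
      c a = c G.x ∨ c a = k := by
    rintro a ⟨p, hp⟩
    exact hp a p.end_mem_support
  have hadj : ∀ a b : V, ReachableWithin G.graph {w | c w = c G.x ∨ c w = k} G.x a →
      G.graph.Adj a b → (c b = c G.x ∨ c b = k) →
      ReachableWithin G.graph {w | c w = c G.x ∨ c w = k} G.x b := by
    intro a b ha hab hb
    refine htr _ _ _ ha ⟨hab.toWalk, fun w hw => ?_⟩
    have hw2 : w = a ∨ w = b := by simpa using hw
    rcases hw2 with rfl | rfl
    · exact hmem _ ha
    · exact hb
  classical
  generalize hR : ReachableWithin G.graph {w | c w = c G.x ∨ c w = k} G.x = R at *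
  let c' : V → Fin 4 := fun w => if R w then (if c w = c G.x then k else c G.x) else c w
  have hstep : KempeStep G.graph c c' := by
    refine ⟨c G.x, k, hk.symm, {w | R w}, ⟨G.x, hxx⟩, fun a ha => hmem a ha, ?_, ?_, ?_, ?_⟩
    · intro h
      have : G.y ∈ {w | R w} := by
        rw [h]; exact Or.inl hns.symm
      exact hy this
    · intro a ha b hb
      have ha2 : R a := ha
      show R b
      rw [← hR] at ha2 ⊢
      exact htr _ _ _ ha2 hb
    · intro w hw
      have hw2 : R w := hw
      simp [c', hw2]
    · intro w hw
      have hw2 : ¬ R w := hw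
      simp [c', hw2]
  have hc' : IsProper4Coloring G.graph c' := by
    intro a b hab
    have h0 := hc a b hab
    have h1 := hadj a b
    have h2 := hadj b a
    have h3 := hmem a
    have h4 := hmem b
    have h5 := hab.symm
    simp only [c']
    grind
  have h := (hA c c' hc hc' (Relation.EqvGen.rel _ _ hstep)).1 hns
  simp only [c', if_pos hxx, if_neg hy] at h
  simp at h
  exact hk (h.trans hns.symm)
end

section
/- Let G_xy be a parented a-graph belonging to A* and let c be a solution state of G_xy, say with c(x) = 1 and c(y) = 2. Then there exists a path between x and y in G_xy all of whose vertices are colored 1 or 2; that is, there exists a 2-color path between x and y using the colors of x and y. -/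
open SimpleGraph

/-- For `G_xy ∈ A*` and a solution state `c` (with `c x ≠ c y`), there is
a path between `x` and `y` all of whose vertices are colored with the colors of `x`
and `y`. -/
theorem stmt_5 {V : Type} [Fintype V] [DecidableEq V] (G : AGraph V)
    (hA : NoNSClass G.graph G.x G.y) (c : V → Fin 4)
    (hc : IsProper4Coloring G.graph c) (hs : c G.x ≠ c G.y) :
    ∃ p : G.graph.Walk G.x G.y, ∀ w ∈ p.support, c w = c G.x ∨ c w = c G.y := by
  by_contra hno
  let S : Set V := {w | c w = c G.x ∨ c w = c G.y}
  let U : Set V := {b | ReachableWithin G.graph S G.x b}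
  have hxU : G.x ∈ U := ⟨Walk.nil, by intro w hw; simp at hw; subst hw; exact Or.inl rfl⟩
  have hyU : G.y ∉ U := fun h => hno h
  have hUS : U ⊆ S := fun b ⟨p, hp⟩ => hp b p.end_mem_support
  have hcl : ∀ a ∈ U, ∀ b : V, ReachableWithin G.graph S a b → b ∈ U := by
    rintro a ⟨p, hp⟩ b ⟨q, hq⟩
    refine ⟨p.append q, fun w hw => ?_⟩
    rcases (Walk.mem_support_append_iff p q).1 hw with h | h
    · exact hp w h
    · exact hq w h
  have hadj : ∀ a ∈ U, ∀ b, G.graph.Adj a b → b ∈ S → b ∈ U := by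
    intro a ha b hab hb
    refine hcl a ha b ⟨Walk.cons hab Walk.nil, fun w hw => ?_⟩
    simp at hw
    rcases hw with rfl | rfl
    · exact hUS ha
    · exact hb
  classical
  let c' : V → Fin 4 := fun w => if w ∈ U then (if c w = c G.x then c G.y else c G.x) else c w
  have hin : ∀ w ∈ U, c' w = if c w = c G.x then c G.y else c G.x := fun w hw => if_pos hw
  have hout : ∀ w, w ∉ U → c' w = c w := fun w hw => if_neg hw
  have hstep : KempeStep G.graph c c' := by
    refine ⟨c G.x, c G.y, hs, U, ⟨_, hxU⟩, hUS, ?_, hcl, hin, hout⟩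
    intro h
    exact hyU (h ▸ (Or.inr rfl : G.y ∈ S))
  have hmix : ∀ a b, G.graph.Adj a b → a ∈ U → b ∉ U → c' a ≠ c' b := by
    intro a b hab ha hb h
    rw [hin a ha, hout b hb] at h
    refine hb (hadj a ha b hab ?_)
    show c b = c G.x ∨ c b = c G.y
    split_ifs at h
    · exact Or.inr h.symm
    · exact Or.inl h.symm
  have hc' : IsProper4Coloring G.graph c' := by
    intro a b hab
    by_cases ha : a ∈ U <;> by_cases hb : b ∈ U
    · rw [hin a ha, hin b hb]
      have h1 := hc a b hab
      have h2 : c a = c G.x ∨ c a = c G.y := hUS ha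
      have h3 : c b = c G.x ∨ c b = c G.y := hUS hb
      grind
    · exact hmix a b hab ha hb
    · exact (hmix b a hab.symm hb ha).symm
    · rw [hout a ha, hout b hb]; exact hc a b hab
  refine hs ((hA c c' hc hc' (Relation.EqvGen.rel _ _ hstep)).2 ?_)
  rw [hin _ hxU, hout _ hyU, if_pos rfl]
end

section
/- If G is an a-graph belonging to G(0,n) or to G(1,n) (i.e., its inner ring encloses at most one interior vertex), then G is not internally 6a-connected: neither of its two parent triangulations is internally 6-connected. -/
open SimpleGraph

namespace Stmt10Aux

open Classical in
/-- number of boundary neighbours -/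
noncomputable def dB {V : Type} [Fintype V] [DecidableEq V] (G : AGraph V) (w : V) : ℕ :=
  ((boundaryFinset G).filter fun b => G.graph.Adj w b).card

open Classical in
/-- degree -/
noncomputable def dg {V : Type} [Fintype V] [DecidableEq V] (G : AGraph V) (w : V) : ℕ :=
  (Finset.univ.filter fun b => G.graph.Adj w b).card

section
variable {V : Type} [Fintype V] [DecidableEq V] (G : AGraph V)

theorem distinct : G.u ≠ G.x ∧ G.x ≠ G.v ∧ G.v ≠ G.y ∧ G.y ≠ G.u ∧ G.x ≠ G.y ∧ G.u ≠ G.v :=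
  ⟨G.adj_ux.ne, G.adj_xv.ne, G.adj_vy.ne, G.adj_yu.ne, G.x_ne_y, G.u_ne_v⟩

theorem bcard : (boundaryFinset G).card = 4 := by
  obtain ⟨h1, h2, h3, h4, h5, h6⟩ := distinct G
  unfold boundaryFinset
  rw [Finset.card_insert_of_notMem, Finset.card_insert_of_notMem,
    Finset.card_insert_of_notMem, Finset.card_singleton] <;> simp <;> grind

open Classical in
theorem dB_eq (w : V) : dB G w = (if G.graph.Adj w G.u then 1 else 0) +
    (if G.graph.Adj w G.x then 1 else 0) + (if G.graph.Adj w G.v then 1 else 0) +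
    (if G.graph.Adj w G.y then 1 else 0) := by
  obtain ⟨h1, h2, h3, h4, h5, h6⟩ := distinct G
  unfold dB boundaryFinset
  rw [Finset.card_filter, Finset.sum_insert, Finset.sum_insert, Finset.sum_insert,
    Finset.sum_singleton]
  · ring
  all_goals simp
  all_goals grind

open Classical in
theorem dg_sum : ∑ w, dg G w = 2 * G.graph.edgeSet.ncard := by
  have := G.graph.sum_degrees_eq_twice_card_edges
  rw [← SimpleGraph.coe_edgeFinset, Set.ncard_coe_finset, ← this]
  refine Finset.sum_congr rfl fun w _ => ?_
  unfold dg
  rw [← SimpleGraph.card_neighborFinset_eq_degree]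
  congr 1
  ext b; simp

open Classical in
theorem face_count : 6 * G.faces.card + 8 = 2 * ∑ w, dg G w := by
  obtain ⟨h1, h2, h3, h4, h5, h6⟩ := distinct G
  set P : Finset (V × V) := Finset.univ.filter fun p => G.graph.Adj p.1 p.2 with hP
  have hPc : P.card = ∑ w, dg G w := by
    unfold dg
    rw [hP, ← Finset.univ_product_univ, Finset.card_filter, Finset.sum_product]
    simp only [Finset.card_filter]
  have key := Finset.sum_card_bipartiteAbove_eq_sum_card_bipartiteBelow (s := P) (t := G.faces)
    (fun p f => p.1 ∈ f ∧ p.2 ∈ f)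
  have hB : ∀ f ∈ G.faces, (P.bipartiteBelow (fun p f => p.1 ∈ f ∧ p.2 ∈ f) f).card = 6 := by
    intro f hf
    have : P.bipartiteBelow (fun p f => p.1 ∈ f ∧ p.2 ∈ f) f = f.offDiag := by
      ext ⟨a, b⟩
      simp only [Finset.bipartiteBelow, hP, Finset.mem_filter, Finset.mem_univ, true_and,
        Finset.mem_offDiag]
      constructor
      · rintro ⟨h, ha, hb⟩; exact ⟨ha, hb, h.ne⟩
      · rintro ⟨ha, hb, h⟩; exact ⟨G.faces_adj f hf a ha b hb h, ha, hb⟩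
    rw [this, Finset.offDiag_card, G.faces_card f hf]
  rw [Finset.sum_congr rfl hB, Finset.sum_const, smul_eq_mul] at key
  set Q : V × V → Prop := fun p => ({p.1, p.2} : Finset V) ∈
    ({{G.u, G.x}, {G.x, G.v}, {G.v, G.y}, {G.y, G.u}} : Finset (Finset V)) with hQ
  have hA : ∀ p ∈ P, (G.faces.bipartiteAbove (fun p f => p.1 ∈ f ∧ p.2 ∈ f) p).card
      + (if Q p then 1 else 0) = 2 := by
    intro p hp
    have := G.edge_faces p.1 p.2 (by simpa [hP] using hp)
    unfold Finset.bipartiteAbove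
    rw [this]
    simp only [hQ]
    split_ifs <;> rfl
  have hs := Finset.sum_congr rfl hA
  rw [Finset.sum_add_distrib, key, ← Finset.card_filter, Finset.sum_const, smul_eq_mul] at hs
  have hF : P.filter Q = {(G.u, G.x), (G.x, G.u), (G.x, G.v), (G.v, G.x), (G.v, G.y), (G.y, G.v),
      (G.y, G.u), (G.u, G.y)} := by
    have pe : ∀ a b c d : V, ({a, b} : Finset V) = {c, d} ↔ (a = c ∧ b = d ∨ a = d ∧ b = c) := by
      intro a b c d
      rw [← Finset.coe_inj]
      simp only [Finset.coe_insert, Finset.coe_singleton]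
      exact Set.pair_eq_pair_iff
    ext ⟨a, b⟩
    have e1 := G.adj_ux
    have e2 := G.adj_xv
    have e3 := G.adj_vy
    have e4 := G.adj_yu
    have e1' := G.adj_ux.symm
    have e2' := G.adj_xv.symm
    have e3' := G.adj_vy.symm
    have e4' := G.adj_yu.symm
    simp only [hP, hQ, Finset.mem_filter, Finset.mem_univ, true_and, Finset.mem_insert,
      Finset.mem_singleton, pe, Prod.mk.injEq]
    constructor
    · rintro ⟨_, h⟩
      rcases h with (h | h) | (h | h) | (h | h) | (h | h) <;> rw [h.1, h.2] <;> simp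
    · intro h
      rcases h with h | h | h | h | h | h | h | h <;> rw [h.1, h.2] <;>
        refine ⟨by assumption, ?_⟩ <;> simp
  have h8 : (P.filter Q).card = 8 := by
    rw [hF]
    repeat rw [Finset.card_insert_of_notMem]
    · rw [Finset.card_singleton]
    all_goals simp only [Finset.mem_insert, Finset.mem_singleton, Prod.mk.injEq]
    all_goals grind
  have hs' : G.faces.card * 6 + 8 = P.card * 2 := by
    rw [← h8]
    convert hs
  omega

open Classical in
theorem main_count : ∑ w ∈ interiorFinset G, (dg G w + dB G w) =
    6 * (interiorFinset G).card + 2 := by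
  have hf := face_count G
  have hd := dg_sum G
  have he := G.euler
  have hV : (interiorFinset G).card + 4 = Fintype.card V := by
    have := Finset.card_sdiff_add_card_eq_card (Finset.subset_univ (boundaryFinset G))
    rw [bcard] at this
    exact this
  have hsp : ∀ f : V → ℕ, ∑ w ∈ interiorFinset G, f w + ∑ w ∈ boundaryFinset G, f w = ∑ w, f w :=
    fun f => Finset.sum_sdiff (Finset.subset_univ _)
  have hsw : ∑ w, dB G w = ∑ b ∈ boundaryFinset G, dg G b := by
    unfold dB dg
    simp only [Finset.card_filter]
    rw [Finset.sum_comm]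
    simp only [G.graph.adj_comm]
  have hb : ∑ w ∈ boundaryFinset G, dB G w = 8 := by
    have : ∀ w ∈ boundaryFinset G, dB G w = 2 := by
      intro w hw
      have e1 := G.adj_ux
      have e2 := G.adj_xv
      have e3 := G.adj_vy
      have e4 := G.adj_yu
      have e5 := G.not_adj_xy
      have e6 := G.not_adj_uv
      have e5' : ¬ G.graph.Adj G.y G.x := fun h => e5 h.symm
      have e6' : ¬ G.graph.Adj G.v G.u := fun h => e6 h.symm
      rw [dB_eq]
      simp only [boundaryFinset, Finset.mem_insert, Finset.mem_singleton] at hw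
      rcases hw with rfl | rfl | rfl | rfl <;>
        simp [e1, e2, e3, e4, e5, e6, e1.symm, e2.symm, e3.symm, e4.symm,
          e5', e6']
    rw [Finset.sum_congr rfl this, Finset.sum_const, bcard]; rfl
  have s1 := hsp (dg G)
  have s2 := hsp (dB G)
  rw [Finset.sum_add_distrib]
  omega

theorem third {a b : V} (hab : G.graph.Adj a b) (f : Finset V) (hf : f ∈ G.faces)
    (ha : a ∈ f) (hb : b ∈ f) : ∃ t, f = {a, b, t} ∧ G.graph.Adj t a ∧ G.graph.Adj t b := by
  have hc := G.faces_card f hf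
  have h2 : ({a, b} : Finset V).card = 2 := Finset.card_pair hab.ne
  have hsub : ({a, b} : Finset V) ⊆ f := by
    intro z; simp only [Finset.mem_insert, Finset.mem_singleton]; rintro (rfl | rfl) <;> assumption
  have h3 := Finset.card_sdiff_add_card_eq_card hsub
  obtain ⟨t, ht⟩ := Finset.card_eq_one.mp (show (f \ {a, b}).card = 1 by omega)
  have htm : t ∈ f \ {a, b} := by rw [ht]; simp
  simp only [Finset.mem_sdiff, Finset.mem_insert, Finset.mem_singleton, not_or] at htm
  refine ⟨t, ?_, G.faces_adj f hf t htm.1 a ha htm.2.1, G.faces_adj f hf t htm.1 b hb htm.2.2⟩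
  have := Finset.sdiff_union_of_subset hsub
  rw [ht] at this
  rw [← this]
  ext z; simp; tauto

theorem apex {a b : V} (hab : G.graph.Adj a b)
    (hm : ({a, b} : Finset V) ∈ ({{G.u, G.x}, {G.x, G.v}, {G.v, G.y}, {G.y, G.u}} :
      Finset (Finset V))) : ∃ t, G.graph.Adj t a ∧ G.graph.Adj t b := by
  have h := G.edge_faces a b hab
  rw [if_pos hm] at h
  obtain ⟨f, hf⟩ := Finset.card_eq_one.mp h
  have : f ∈ G.faces.filter fun f => a ∈ f ∧ b ∈ f := by rw [hf]; simp
  simp only [Finset.mem_filter] at this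
  obtain ⟨t, _, h⟩ := third G hab f this.1 this.2.1 this.2.2
  exact ⟨t, h⟩

theorem mem_int (w : V) : w ∈ interiorFinset G ↔ w ≠ G.u ∧ w ≠ G.x ∧ w ≠ G.v ∧ w ≠ G.y := by
  simp [interiorFinset, boundaryFinset]

open Classical in
theorem mem_ring (w : V) : w ∈ innerRingFinset G ↔ w ∈ interiorFinset G ∧
    (G.graph.Adj w G.u ∨ G.graph.Adj w G.x ∨ G.graph.Adj w G.v ∨ G.graph.Adj w G.y) := by
  rw [innerRingFinset, Finset.mem_filter]
  simp [boundaryFinset]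

open Classical in
theorem core (hdeg : ∀ w ∈ interiorFinset G, 5 ≤ dg G w)
    (hm : (interiorFinset G \ innerRingFinset G).card ≤ 1) : False := by
  obtain ⟨n1, n2, n3, n4, n5, n6⟩ := distinct G
  have e1 := G.adj_ux
  have e2 := G.adj_xv
  have e3 := G.adj_vy
  have e4 := G.adj_yu
  have e5 := G.not_adj_xy
  have e6 := G.not_adj_uv
  have e5' : ¬ G.graph.Adj G.y G.x := fun h => e5 h.symm
  have e6' : ¬ G.graph.Adj G.v G.u := fun h => e6 h.symm
  have hir : ∀ w, ¬ G.graph.Adj w w := fun w => G.graph.irrefl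
  set R := innerRingFinset G with hR
  have hRs : R ⊆ interiorFinset G := fun w hw => ((mem_ring G w).1 hw).1
  have hdB1 : ∀ w ∈ R, 1 ≤ dB G w := by
    intro w hw
    have := ((mem_ring G w).1 hw).2
    rw [dB_eq]
    rcases this with h | h | h | h <;> simp only [h, if_true] <;> omega
  have hk : ∑ w ∈ R, ((dB G w - 1) + (dg G w - 5)) ≤ 3 := by
    have hc := main_count G
    rw [← Finset.sum_sdiff hRs, ← Finset.card_sdiff_add_card_eq_card hRs] at hc
    have h1 : (interiorFinset G \ R).card * 5 ≤
        ∑ w ∈ interiorFinset G \ R, (dg G w + dB G w) := by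
      rw [← smul_eq_mul]
      apply Finset.card_nsmul_le_sum
      intro w hw
      have := hdeg w (Finset.mem_sdiff.1 hw).1
      omega
    have h2 : ∑ w ∈ R, (dg G w + dB G w) =
        ∑ w ∈ R, ((dB G w - 1) + (dg G w - 5)) + R.card * 6 := by
      rw [← smul_eq_mul, ← Finset.sum_const, ← Finset.sum_add_distrib]
      refine Finset.sum_congr rfl fun w hw => ?_
      have := hdeg w (hRs hw)
      have := hdB1 w hw
      omega
    omega
  obtain ⟨r1, a1, b1⟩ := apex G e1 (by simp)
  obtain ⟨r2, a2, b2⟩ := apex G e2 (by simp)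
  obtain ⟨r3, a3, b3⟩ := apex G e3 (by simp)
  obtain ⟨r4, a4, b4⟩ := apex G e4 (by simp)
  have m1 : r1 ∈ R := by
    rw [hR, mem_ring, mem_int]; refine ⟨⟨?_, ?_, ?_, ?_⟩, by tauto⟩ <;> rintro rfl <;> grind
  have m2 : r2 ∈ R := by
    rw [hR, mem_ring, mem_int]; refine ⟨⟨?_, ?_, ?_, ?_⟩, by tauto⟩ <;> rintro rfl <;> grind
  have m3 : r3 ∈ R := by
    rw [hR, mem_ring, mem_int]; refine ⟨⟨?_, ?_, ?_, ?_⟩, by tauto⟩ <;> rintro rfl <;> grind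
  have m4 : r4 ∈ R := by
    rw [hR, mem_ring, mem_int]; refine ⟨⟨?_, ?_, ?_, ?_⟩, by tauto⟩ <;> rintro rfl <;> grind
  by_cases hall : r1 = r2 ∧ r2 = r3 ∧ r3 = r4
  · obtain ⟨rfl, rfl, rfl⟩ := hall
    have hB4 : dB G r1 = 4 := by rw [dB_eq]; simp [*]
    have hr5 : dg G r1 = 5 := by
      have h1 := Finset.single_le_sum
        (f := fun w => (dB G w - 1) + (dg G w - 5)) (fun _ _ => Nat.zero_le _) m1
      have h2 := hdeg r1 (hRs m1)
      omega
    have hsub : boundaryFinset G ⊆ Finset.univ.filter fun b => G.graph.Adj r1 b := by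
      intro z
      simp only [boundaryFinset, Finset.mem_insert, Finset.mem_singleton, Finset.mem_filter,
        Finset.mem_univ, true_and]
      rintro (rfl | rfl | rfl | rfl) <;> assumption
    have hc := Finset.card_sdiff_add_card_eq_card hsub
    rw [bcard] at hc
    unfold dg at hr5
    obtain ⟨q, hq⟩ := Finset.card_eq_one.mp
      (show ((Finset.univ.filter fun b => G.graph.Adj r1 b) \ boundaryFinset G).card = 1 by omega)
    have hnb : ∀ t, G.graph.Adj r1 t → t ∉ boundaryFinset G → t = q := by
      intro t h1 h2
      have : t ∈ (Finset.univ.filter fun b => G.graph.Adj r1 b) \ boundaryFinset G := by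
        simp [h1, h2]
      rw [hq] at this
      simpa using this
    have hqm : q ∈ (Finset.univ.filter fun b => G.graph.Adj r1 b) \ boundaryFinset G := by
      rw [hq]; simp
    simp only [Finset.mem_sdiff, Finset.mem_filter, Finset.mem_univ, true_and] at hqm
    obtain ⟨hrq, hqB⟩ := hqm
    have hef := G.edge_faces r1 q hrq
    have hri := (mem_int G r1).1 (hRs m1)
    rw [if_neg] at hef
    swap
    · simp only [Finset.mem_insert, Finset.mem_singleton]
      intro hh
      have : r1 ∈ ({r1, q} : Finset V) := by simp
      rcases hh with h | h | h | h <;> rw [h] at this <;> simp at this <;> tauto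
    obtain ⟨f1, f2, hne, hff⟩ := Finset.card_eq_two.mp hef
    have hf1 : f1 ∈ G.faces.filter fun f => r1 ∈ f ∧ q ∈ f := by rw [hff]; simp
    have hf2 : f2 ∈ G.faces.filter fun f => r1 ∈ f ∧ q ∈ f := by rw [hff]; simp
    simp only [Finset.mem_filter] at hf1 hf2
    obtain ⟨t1, g1, g1r, g1q⟩ := third G hrq f1 hf1.1 hf1.2.1 hf1.2.2
    obtain ⟨t2, g2, g2r, g2q⟩ := third G hrq f2 hf2.1 hf2.2.1 hf2.2.2
    have htne : t1 ≠ t2 := by rintro rfl; exact hne (g1.trans g2.symm)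
    have t1B : t1 ∈ boundaryFinset G := by
      by_contra h; exact g1q.ne (hnb t1 g1r.symm h)
    have t2B : t2 ∈ boundaryFinset G := by
      by_contra h; exact g2q.ne (hnb t2 g2r.symm h)
    have hq2 : 2 ≤ dB G q := by
      unfold dB
      rw [← Finset.card_pair htne]
      apply Finset.card_le_card
      intro z
      simp only [Finset.mem_insert, Finset.mem_singleton, Finset.mem_filter]
      rintro (rfl | rfl)
      · exact ⟨t1B, g1q.symm⟩
      · exact ⟨t2B, g2q.symm⟩
    have hqR : q ∈ R := by
      rw [hR, innerRingFinset, Finset.mem_filter]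
      exact ⟨by simp [interiorFinset, hqB], t1, t1B, g1q.symm⟩
    have hp : ∑ w ∈ ({r1, q} : Finset V), ((dB G w - 1) + (dg G w - 5)) ≤ 3 := by
      refine le_trans (Finset.sum_le_sum_of_subset ?_) hk
      intro z
      simp only [Finset.mem_insert, Finset.mem_singleton]
      rintro (rfl | rfl) <;> assumption
    rw [Finset.sum_pair hrq.ne] at hp
    omega
  · have h4 : ∑ w ∈ R, ((if r1 = w then 1 else 0) + (if r2 = w then 1 else 0) +
        (if r3 = w then 1 else 0) + (if r4 = w then 1 else 0)) = 4 := by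
      simp only [Finset.sum_add_distrib, Finset.sum_ite_eq, m1, m2, m3, m4, if_true]
    have hle : ∑ w ∈ R, ((if r1 = w then 1 else 0) + (if r2 = w then 1 else 0) +
        (if r3 = w then 1 else 0) + (if r4 = w then 1 else 0)) ≤
        ∑ w ∈ R, ((dB G w - 1) + (dg G w - 5)) := by
      refine Finset.sum_le_sum fun w hw => ?_
      refine le_trans ?_ (Nat.le_add_right _ _)
      rw [dB_eq]
      by_cases c1 : r1 = w <;> by_cases c2 : r2 = w <;> by_cases c3 : r3 = w <;>
        by_cases c4 : r4 = w <;> simp only [c1, c2, c3, c4, if_true, if_false] <;>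
        first
        | (exfalso; apply hall; simp [c1, c2, c3, c4]; done)
        | (subst_vars; simp [*]; done)
        | (subst_vars; simp only [*, if_true]; omega)
    omega

end

end Stmt10Aux

/-- If `G` belongs to `G(0,n)` or `G(1,n)`, then `G` is not internally
6a-connected: neither parent triangulation is internally 6-connected. -/
theorem stmt_10 {V : Type} [Fintype V] [DecidableEq V] (G : AGraph V) (n : ℕ)
    (h : InFamilyG G 0 n ∨ InFamilyG G 1 n) :
    ¬ Internally6aConnected G := by
  classical
  rintro ⟨T, hT, hmin, -⟩
  refine Stmt10Aux.core G ?_ ?_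
  · intro w hw
    have h5 := hmin w
    rw [Stmt10Aux.mem_int] at hw
    have : T.graph.neighborSet w = ((Finset.univ.filter fun b => G.graph.Adj w b : Finset V) : Set V) := by
      ext b
      rcases hT with hT | hT <;> rw [hT] <;>
        simp [parentXYGraph, parentUVGraph, SimpleGraph.fromEdgeSet_adj, hw]
    unfold vdeg at h5
    rw [this, Set.ncard_coe_finset] at h5
    unfold Stmt10Aux.dg
    convert h5
  · rcases h with h | h <;> rw [h.2]
    exact Nat.zero_le _
end

section
/- If G is an a-graph belonging to G(2,n) (its inner ring encloses exactly two interior vertices) and G is internally 6a-connected, then G is isomorphic to G*, the order-12 a-graph obtained from the icosahedron by deleting one edge; in particular n = 6 and every interior vertex of G has degree 5. -/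
open SimpleGraph

section Abstract
variable {V : Type} {Adj : V → V → Prop} {Fc : V → V → V → Prop} {B : V → Prop}

/-- abstract combinatorial data -/
structure Cx (Adj : V → V → Prop) (Fc : V → V → V → Prop) (B : V → Prop) : Prop where
  symm : ∀ a b, Adj a b → Adj b a
  s1 : ∀ a b c, Fc a b c → Fc b a c
  s2 : ∀ a b c, Fc a b c → Fc a c b
  adj : ∀ a b c, Fc a b c → Adj a b
  ne : ∀ a b, Adj a b → a ≠ b
  two : ∀ w a, ¬ B w → Adj w a → ∃ b c, b ≠ c ∧ Fc w a b ∧ Fc w a c ∧ ∀ d, Fc w a d → d = b ∨ d = c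
  nb : ∀ w, ¬ B w → ∃ s : Finset V, s.card = 5 ∧ ∀ z, z ∈ s ↔ Adj w z

/-- link of a vertex -/
structure Lk (Adj : V → V → Prop) (Fc : V → V → V → Prop) (w a b c d e : V) : Prop where
  f1 : Fc w a b
  f2 : Fc w b c
  f3 : Fc w c d
  f4 : Fc w d e
  f5 : Fc w e a
  nd : a ≠ b ∧ a ≠ c ∧ a ≠ d ∧ a ≠ e ∧ b ≠ c ∧ b ≠ d ∧ b ≠ e ∧ c ≠ d ∧ c ≠ e ∧ d ≠ e
  nb : ∀ z, Adj w z ↔ z = a ∨ z = b ∨ z = c ∨ z = d ∨ z = e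

theorem Cx.adj2 (h : Cx Adj Fc B) {a b c : V} (f : Fc a b c) : Adj a c :=
  h.adj _ _ _ (h.s2 _ _ _ f)
theorem Cx.adj3 (h : Cx Adj Fc B) {a b c : V} (f : Fc a b c) : Adj b c :=
  h.adj _ _ _ (h.s2 _ _ _ (h.s1 _ _ _ f))
theorem Cx.rot (h : Cx Adj Fc B) {a b c : V} (f : Fc a b c) : Fc b c a :=
  h.s2 _ _ _ (h.s1 _ _ _ f)
theorem Cx.rot2 (h : Cx Adj Fc B) {a b c : V} (f : Fc a b c) : Fc c a b := h.rot (h.rot f)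
theorem Cx.rev (h : Cx Adj Fc B) {a b c : V} (f : Fc a b c) : Fc c b a := h.s1 _ _ _ (h.rot f)

theorem Cx.uniq (h : Cx Adj Fc B) {w a b c d : V} (hw : ¬ B w) (f1 : Fc w a b) (f2 : Fc w a c)
    (hbc : b ≠ c) (f3 : Fc w a d) : d = b ∨ d = c := by
  obtain ⟨x, y, hxy, _, _, k⟩ := h.two w a hw (h.adj _ _ _ f1)
  have := k _ f1; have := k _ f2; have := k _ f3
  grind

theorem Cx.other (h : Cx Adj Fc B) {w a b : V} (hw : ¬ B w) (f1 : Fc w a b) :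
    ∃ c, c ≠ b ∧ Fc w a c := by
  obtain ⟨x, y, hxy, hx, hy, k⟩ := h.two w a hw (h.adj _ _ _ f1)
  rcases k _ f1 with rfl | rfl
  · exact ⟨y, hxy.symm, hy⟩
  · exact ⟨x, hxy, hx⟩

theorem Cx.link3 (h : Cx Adj Fc B) {w a b c : V} (hw : ¬ B w) (f1 : Fc w a b) (f2 : Fc w b c)
    (hac : a ≠ c) : ∃ d e, Lk Adj Fc w a b c d e := by
  classical
  obtain ⟨s, hs, hn⟩ := h.nb w hw
  have key : ∀ (t : Finset V), t.card < 5 →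
      ∃ y, Adj w y ∧ y ∉ t := by
    intro t ht
    by_contra hcon
    push Not at hcon
    have : s ⊆ t := fun z hz => hcon z ((hn z).1 hz)
    have := Finset.card_le_card this
    omega
  have nab := h.ne _ _ (h.adj3 f1)
  have nbc := h.ne _ _ (h.adj3 f2)
  obtain ⟨d, hdb, f3⟩ := h.other hw (h.s2 _ _ _ f2)
  have ncd := h.ne _ _ (h.adj3 f3)
  have ub : ∀ z, Fc w b z → z = a ∨ z = c := fun z hz => h.uniq hw (h.s2 _ _ _ f1) f2 hac hz
  have uc : ∀ z, Fc w c z → z = b ∨ z = d := fun z hz => h.uniq hw (h.s2 _ _ _ f2) f3 hdb.symm hz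
  have hda : d ≠ a := by
    rintro rfl
    have ua : ∀ z, Fc w d z → z = b ∨ z = c :=
      fun z hz => h.uniq hw f1 (h.s2 _ _ _ f3) nbc hz
    obtain ⟨y, hy, hyn⟩ := key {d, b, c} (by grind [Finset.card_le_three])
    obtain ⟨y1, y2, y12, g1, g2, _⟩ := h.two w y hw hy
    have a1 := h.adj2 g1
    have a2 := h.adj2 g2
    have e1 := h.ne _ _ (h.adj3 g1)
    have e2 := h.ne _ _ (h.adj3 g2)
    have m1 : y1 ∉ ({d, b, c} : Finset V) := by
      have := h.s2 _ _ _ g1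
      grind
    have m2 : y2 ∉ ({d, b, c} : Finset V) := by
      have := h.s2 _ _ _ g2
      grind
    have hsub : ({d, b, c, y, y1, y2} : Finset V) ⊆ s := by
      intro z hz
      rw [hn]
      simp only [Finset.mem_insert, Finset.mem_singleton] at hz
      rcases hz with rfl | rfl | rfl | rfl | rfl | rfl
      · exact h.adj _ _ _ f1
      · exact h.adj2 f1
      · exact h.adj2 f2
      all_goals assumption
    have h6 : ({d, b, c, y, y1, y2} : Finset V).card = 6 := by
      repeat rw [Finset.card_insert_of_notMem (by grind)]
      simp
    have := Finset.card_le_card hsub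
    omega
  obtain ⟨e, hec, f4⟩ := h.other hw (h.s2 _ _ _ f3)
  have nde := h.ne _ _ (h.adj3 f4)
  have ud : ∀ z, Fc w d z → z = c ∨ z = e := fun z hz => h.uniq hw (h.s2 _ _ _ f3) f4 hec.symm hz
  have heb : e ≠ b := by
    rintro rfl
    have := ub d (h.s2 _ _ _ f4)
    grind
  have hea : e ≠ a := by
    rintro rfl
    have ua : ∀ z, Fc w e z → z = b ∨ z = d :=
      fun z hz => h.uniq hw f1 (h.s2 _ _ _ f4) hdb.symm hz
    obtain ⟨y, hy, hyn⟩ := key {e, b, c, d} (by grind [Finset.card_le_four])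
    obtain ⟨y1, y2, y12, g1, g2, _⟩ := h.two w y hw hy
    have a1 := h.adj2 g1
    have e1 := h.ne _ _ (h.adj3 g1)
    have m1 : y1 ∉ ({e, b, c, d} : Finset V) := by
      have := h.s2 _ _ _ g1
      grind
    have hsub : ({e, b, c, d, y, y1} : Finset V) ⊆ s := by
      intro z hz
      rw [hn]
      simp only [Finset.mem_insert, Finset.mem_singleton] at hz
      rcases hz with rfl | rfl | rfl | rfl | rfl | rfl
      · exact h.adj _ _ _ f1
      · exact h.adj2 f1
      · exact h.adj2 f2
      · exact h.adj2 f3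
      all_goals assumption
    have h6 : ({e, b, c, d, y, y1} : Finset V).card = 6 := by
      repeat rw [Finset.card_insert_of_notMem (by grind)]
      simp
    have := Finset.card_le_card hsub
    omega
  have hseq : ({a, b, c, d, e} : Finset V) = s := by
    apply Finset.eq_of_subset_of_card_le
    · intro z hz
      rw [hn]
      simp only [Finset.mem_insert, Finset.mem_singleton] at hz
      rcases hz with rfl | rfl | rfl | rfl | rfl
      · exact h.adj _ _ _ f1
      · exact h.adj2 f1
      · exact h.adj2 f2
      · exact h.adj2 f3
      · exact h.adj2 f4
    · rw [hs]
      have : ({a, b, c, d, e} : Finset V).card = 5 := by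
        repeat rw [Finset.card_insert_of_notMem (by grind)]
        simp
      omega
  obtain ⟨g, hgd, f5⟩ := h.other hw (h.s2 _ _ _ f4)
  have neg := h.ne _ _ (h.adj3 f5)
  have hga : g = a := by
    have hg : g ∈ s := (hn g).2 (h.adj2 f5)
    rw [← hseq] at hg
    have := ub e
    have := uc e
    have := h.s2 _ _ _ f5
    simp only [Finset.mem_insert, Finset.mem_singleton] at hg
    grind
  subst hga
  refine ⟨d, e, f1, f2, f3, f4, f5, by grind, fun z => ?_⟩
  rw [← hn, ← hseq]
  simp

theorem Cx.link4 (h : Cx Adj Fc B) {w a b c d : V} (hw : ¬ B w) (f1 : Fc w a b) (f2 : Fc w b c)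
    (f3 : Fc w c d) (hac : a ≠ c) (hbd : b ≠ d) : ∃ e, Lk Adj Fc w a b c d e := by
  obtain ⟨d', e, L⟩ := h.link3 hw f1 f2 hac
  have := h.uniq hw (h.s2 _ _ _ f2) L.f3 (by have := L.nd; grind) f3
  have : d = d' := by grind
  subst this
  exact ⟨e, L⟩

/-- full abstract hypotheses -/
structure Cy (Adj : V → V → Prop) (Fc : V → V → V → Prop) (B : V → Prop) (p q : V) : Prop
    extends Cx Adj Fc B where
  hp : ¬ B p
  hq : ¬ B q
  hpq : p ≠ q
  pB : ∀ b, Adj p b → ¬ B b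
  qB : ∀ b, Adj q b → ¬ B b
  hR : ∀ w, ¬ B w → w ≠ p → w ≠ q → ∃ b, B b ∧ Adj w b
  ear : ∀ t b r r' b' w, ¬ B t → Lk Adj Fc t b r r' b' w → B b → B b' → ¬ B r → ¬ B r' → B w
  bd : ∀ b b' r r', B b → B b' → Fc b b' r → Fc b b' r' → r = r'
  conn : ∀ S : V → Prop, S p → (∀ a b, S a → ¬ B a → ¬ B b → Adj a b → S b) → ∀ w, ¬ B w → S w
  deg : ∀ b, B b → ∃ z z', z ≠ z' ∧ ¬ B z ∧ ¬ B z' ∧ Adj b z ∧ Adj b z'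

variable {p q : V}

theorem Cx.perms (C : Cx Adj Fc B) {a b c : V} (f : Fc a b c) :
    Fc a b c ∧ Fc a c b ∧ Fc b a c ∧ Fc b c a ∧ Fc c a b ∧ Fc c b a :=
  ⟨f, C.s2 _ _ _ f, C.s1 _ _ _ f, C.rot f, C.rot2 f, C.rev f⟩

theorem Cy.swap (h : Cy Adj Fc B p q) (hpq : Adj p q) : Cy Adj Fc B q p :=
  { h.toCx with
    hp := h.hq
    hq := h.hp
    hpq := h.hpq.symm
    pB := h.qB
    qB := h.pB
    hR := fun w a b c => h.hR w a c b
    ear := h.ear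
    bd := h.bd
    conn := fun S hS hc => h.conn S (hc q p hS h.hq h.hp (h.symm _ _ hpq)) hc
    deg := h.deg }

theorem Cy.nonadj_step (h : Cy Adj Fc B p q) (hn : ¬ Adj p q) {r r' r'' t t2 : V}
    (hr : Adj p r) (hr'' : Adj p r'')
    (L : Lk Adj Fc r r' p r'' t t2) (ht : ¬ B t) (hr' : Adj p r') :
    t ≠ q ∧ ∀ z, Adj t z → ¬ B z → Adj p z := by
  have C := h.toCx
  have rB := h.pB _ hr
  have r'B := h.pB _ hr'
  have r''B := h.pB _ hr''
  have hp := h.hp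
  have t2B : B t2 := by
    obtain ⟨b, hb, hrb⟩ := h.hR r rB (C.ne _ _ hr).symm (by rintro rfl; exact hn hr)
    have := (L.nb b).1 hrb
    grind
  have htq : t ≠ q := by
    rintro rfl
    exact h.qB _ (C.adj3 L.f4) t2B
  refine ⟨htq, ?_⟩
  have nd := L.nd
  obtain ⟨d, e, L2⟩ := C.link3 (w := r'') (a := p) (b := r) (c := t) r''B
    (C.s2 _ _ _ (C.rot2 L.f2)) (C.s1 _ _ _ L.f3) (by grind)
  have epe : Adj p e := C.symm _ _ (C.adj3 L2.f5)
  have eB := h.pB _ epe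
  have dB : B d := by
    obtain ⟨b, hb, hrb⟩ := h.hR r'' r''B (C.ne _ _ hr'').symm (by rintro rfl; exact hn hr'')
    have := (L2.nb b).1 hrb
    grind
  obtain ⟨w, L3⟩ := C.link4 (w := t) (a := t2) (b := r) (c := r'') (d := d) ht
    (by simp [C.perms L.f4]) (by simp [C.perms L.f3]) (by simp [C.perms L2.f3])
    (by grind) (by grind)
  have wB := h.ear _ _ _ _ _ _ ht L3 t2B dB rB r''B
  intro z hz hzB
  have := (L3.nb z).1 hz
  grind

theorem Lk.symm' (C : Cx Adj Fc B) {w a b c d e : V} (L : Lk Adj Fc w a b c d e) :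
    Lk Adj Fc w c b a e d := by
  obtain ⟨f1, f2, f3, f4, f5, nd, nb⟩ := L
  exact ⟨C.s2 _ _ _ f2, C.s2 _ _ _ f1, C.s2 _ _ _ f5, C.s2 _ _ _ f4, C.s2 _ _ _ f3, by grind,
    fun z => by rw [nb]; grind⟩

theorem Cy.adj_pq (h : Cy Adj Fc B p q) : Adj p q := by
  by_contra hn
  have C := h.toCx
  have key : ∀ r t, Adj p r → Adj r t → ¬ B t → t ≠ p → ¬ Adj p t →
      t ≠ q ∧ ∀ z, Adj t z → ¬ B z → Adj p z := by
    intro r t hr hrt ht htp hpt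
    obtain ⟨r', r'', hne, g1, g2, _⟩ := C.two p r h.hp hr
    have rB := h.pB _ hr
    obtain ⟨t1, t2, L⟩ := C.link3 (w := r) rB (C.rot g1) (C.s1 _ _ _ g2) hne
    have := (L.nb t).1 hrt
    have h1 := C.adj2 g1
    have h2 := C.adj2 g2
    have : t = t1 ∨ t = t2 := by grind
    rcases this with rfl | rfl
    · exact h.nonadj_step hn hr h2 L ht h1
    · exact h.nonadj_step hn hr h1 (L.symm' C) ht h2
  have := h.conn (fun w => w ≠ q ∧ (w = p ∨ Adj p w ∨ ∃ r, Adj p r ∧ Adj r w)) ⟨h.hpq, Or.inl rfl⟩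
    (by
      rintro a b ⟨haq, ha⟩ aB hb hab
      by_cases hpa : Adj p a
      · by_cases hpb : Adj p b
        · exact ⟨by rintro rfl; exact hn hpb, Or.inr (Or.inl hpb)⟩
        by_cases hbp : b = p
        · exact ⟨by rw [hbp]; exact h.hpq, Or.inl hbp⟩
        exact ⟨(key a b hpa hab hb hbp hpb).1, Or.inr (Or.inr ⟨a, hpa, hab⟩)⟩
      by_cases hap : a = p
      · subst hap
        exact ⟨by rintro rfl; exact hn hab, Or.inr (Or.inl hab)⟩
      have : ∃ r, Adj p r ∧ Adj r a := by grind
      obtain ⟨r, hr, hra⟩ := this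
      have := (key r a hr hra aB hap hpa).2 b hab hb
      exact ⟨by rintro rfl; exact hn this, Or.inr (Or.inl this)⟩) q h.hq
  exact this.1 rfl

/-- The conclusion. -/
structure Core (Adj : V → V → Prop) (Fc : V → V → V → Prop)
    (p q c d r1 r2 s1 s2 b1 b3 t t' : V) : Prop where
  Lp : Lk Adj Fc p c q d r2 r1
  Lq : Lk Adj Fc q c p d s2 s1
  Lc : Lk Adj Fc c r1 p q s1 b1
  Ld : Lk Adj Fc d r2 p q s2 b3
  Lr1 : Lk Adj Fc r1 b1 c p r2 t
  Lr2 : Lk Adj Fc r2 b3 d p r1 t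
  Ls1 : Lk Adj Fc s1 b1 c q s2 t'
  Ls2 : Lk Adj Fc s2 b3 d q s1 t'

theorem Cy.side (h : Cy Adj Fc B p q) {c d r1 r2 s1 s2 b1 b3 : V}
    (Lp : Lk Adj Fc p c q d r2 r1)
    (Lc : Lk Adj Fc c r1 p q s1 b1)
    (Ld : Lk Adj Fc d r2 p q s2 b3) : ∃ t, Lk Adj Fc r1 b1 c p r2 t ∧ Lk Adj Fc r2 b3 d p r1 t := by
  have C := h.toCx
  have n1 := Lp.nd
  have n2 := Lc.nd
  have n3 := Ld.nd
  have r1B := h.pB r1 (by rw [Lp.nb]; grind)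
  have r2B := h.pB r2 (by rw [Lp.nb]; grind)
  have cB := h.pB c (by rw [Lp.nb]; grind)
  have dB := h.pB d (by rw [Lp.nb]; grind)
  obtain ⟨t, L1⟩ := C.link4 (w := r1) (a := b1) (b := c) (c := p) (d := r2) r1B
    (by simp [C.perms Lc.f5]) (by simp [C.perms Lc.f1]) (by simp [C.perms Lp.f4])
    (by grind) (by grind)
  obtain ⟨t2, L2⟩ := C.link4 (w := r2) (a := b3) (b := d) (c := p) (d := r1) r2B
    (by simp [C.perms Ld.f5]) (by simp [C.perms Ld.f1]) (by simp [C.perms Lp.f4])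
    (by grind) (by grind)
  have := C.uniq (w := r1) (a := r2) (b := p) (c := t) (d := t2) r1B
    (by simp [C.perms Lp.f4]) (by simp [C.perms L1.f4]) (by have := L1.nd; grind)
    (by simp [C.perms L2.f4])
  have : t2 = t := by have := L2.nd; grind
  subst this
  exact ⟨t2, L1, L2⟩

theorem Cy.core (h : Cy Adj Fc B p q) : ∃ c d r1 r2 s1 s2 b1 b3 t t', B b1 ∧ B b3 ∧
    Core Adj Fc p q c d r1 r2 s1 s2 b1 b3 t t' := by
  have C := h.toCx
  have hpq := h.adj_pq
  obtain ⟨c, d, hcd, g1, g2, _⟩ := C.two p q h.hp hpq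
  obtain ⟨r2, r1, Lp⟩ := C.link3 (w := p) (a := c) (b := q) (c := d) h.hp
    (by simp [C.perms g1]) (by simp [C.perms g2]) hcd
  obtain ⟨s2, s1, Lq⟩ := C.link3 (w := q) (a := c) (b := p) (c := d) h.hq
    (by simp [C.perms g1]) (by simp [C.perms g2]) hcd
  have cB := h.pB c (by rw [Lp.nb]; grind)
  have dB := h.pB d (by rw [Lp.nb]; grind)
  have r1B := h.pB r1 (by rw [Lp.nb]; grind)
  have r2B := h.pB r2 (by rw [Lp.nb]; grind)
  have s1B := h.qB s1 (by rw [Lq.nb]; grind)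
  have s2B := h.qB s2 (by rw [Lq.nb]; grind)
  have hp := h.hp
  have hq := h.hq
  have n1 := Lp.nd
  have n2 := Lq.nd
  have cp : c ≠ p := by grind
  have dp : d ≠ p := by grind
  obtain ⟨b1, Lc⟩ := C.link4 (w := c) (a := r1) (b := p) (c := q) (d := s1) cB
    (by simp [C.perms Lp.f5]) (by simp [C.perms g1]) (by simp [C.perms Lq.f5])
    (by grind) (by grind)
  obtain ⟨b3, Ld⟩ := C.link4 (w := d) (a := r2) (b := p) (c := q) (d := s2) dB
    (by simp [C.perms Lp.f3]) (by simp [C.perms g2]) (by simp [C.perms Lq.f3])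
    (by grind) (by grind)
  have b1B : B b1 := by
    obtain ⟨b, hb, hrb⟩ := h.hR c cB (by grind) (by grind)
    have := (Lc.nb b).1 hrb
    grind
  have b3B : B b3 := by
    obtain ⟨b, hb, hrb⟩ := h.hR d dB (by grind) (by grind)
    have := (Ld.nb b).1 hrb
    grind
  obtain ⟨t, Lr1, Lr2⟩ := h.side Lp Lc Ld
  obtain ⟨t', Ls1, Ls2⟩ := (h.swap hpq).side Lq (s1 := r1) (s2 := r2) (b1 := b1) (b3 := b3)
    (by
      obtain ⟨f1, f2, f3, f4, f5, nd, nb⟩ := Lc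
      exact ⟨C.s2 _ _ _ f3, C.s2 _ _ _ f2, C.s2 _ _ _ f1, C.s2 _ _ _ f5, C.s2 _ _ _ f4, by grind,
        fun z => by rw [nb]; grind⟩)
    (by
      obtain ⟨f1, f2, f3, f4, f5, nd, nb⟩ := Ld
      exact ⟨C.s2 _ _ _ f3, C.s2 _ _ _ f2, C.s2 _ _ _ f1, C.s2 _ _ _ f5, C.s2 _ _ _ f4, by grind,
        fun z => by rw [nb]; grind⟩)
  exact ⟨c, d, r1, r2, s1, s2, b1, b3, t, t', b1B, b3B, Lp, Lq, Lc, Ld, Lr1, Lr2, Ls1, Ls2⟩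

theorem Core.swap (C : Cx Adj Fc B) {c d r1 r2 s1 s2 b1 b3 t t' : V}
    (K : Core Adj Fc p q c d r1 r2 s1 s2 b1 b3 t t') :
    Core Adj Fc q p c d s1 s2 r1 r2 b1 b3 t' t := by
  obtain ⟨Lp, Lq, Lc, Ld, Lr1, Lr2, Ls1, Ls2⟩ := K
  refine ⟨Lq, Lp, ?_, ?_, Ls1, Ls2, Lr1, Lr2⟩
  · obtain ⟨f1, f2, f3, f4, f5, nd, nb⟩ := Lc
    exact ⟨C.s2 _ _ _ f3, C.s2 _ _ _ f2, C.s2 _ _ _ f1, C.s2 _ _ _ f5, C.s2 _ _ _ f4, by grind,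
        fun z => by rw [nb]; grind⟩
  · obtain ⟨f1, f2, f3, f4, f5, nd, nb⟩ := Ld
    exact ⟨C.s2 _ _ _ f3, C.s2 _ _ _ f2, C.s2 _ _ _ f1, C.s2 _ _ _ f5, C.s2 _ _ _ f4, by grind,
        fun z => by rw [nb]; grind⟩

theorem Cy.tlink (h : Cy Adj Fc B p q) {c d r1 r2 s1 s2 b1 b3 t t' : V} (hb1 : B b1) (hb3 : B b3)
    (K : Core Adj Fc p q c d r1 r2 s1 s2 b1 b3 t t') (ht : ¬ B t) :
    ∃ w, B w ∧ Lk Adj Fc t b1 r1 r2 b3 w := by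
  have C := h.toCx
  have r1B := h.pB r1 (by rw [K.Lp.nb]; grind)
  have r2B := h.pB r2 (by rw [K.Lp.nb]; grind)
  obtain ⟨w, L⟩ := C.link4 (w := t) (a := b1) (b := r1) (c := r2) (d := b3) ht
    (by simp [C.perms K.Lr1.f5]) (by simp [C.perms K.Lr1.f4]) (by simp [C.perms K.Lr2.f5])
    (by grind) (by grind)
  exact ⟨w, h.ear _ _ _ _ _ _ ht L hb1 hb3 r1B r2B, L⟩

theorem Cy.all (h : Cy Adj Fc B p q) {c d r1 r2 s1 s2 b1 b3 t t' : V} (hb1 : B b1) (hb3 : B b3)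
    (K : Core Adj Fc p q c d r1 r2 s1 s2 b1 b3 t t') :
    ∀ z, ¬ B z → z = p ∨ z = q ∨ z = c ∨ z = d ∨ z = r1 ∨ z = r2 ∨ z = s1 ∨ z = s2 ∨ z = t ∨
      z = t' := by
  have C := h.toCx
  apply h.conn
  · simp
  · intro a b ha aB bB hab
    rcases ha with rfl | rfl | rfl | rfl | rfl | rfl | rfl | rfl | rfl | rfl
    · have := (K.Lp.nb b).1 hab; grind
    · have := (K.Lq.nb b).1 hab; grind
    · have := (K.Lc.nb b).1 hab; grind
    · have := (K.Ld.nb b).1 hab; grind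
    · have := (K.Lr1.nb b).1 hab; grind
    · have := (K.Lr2.nb b).1 hab; grind
    · have := (K.Ls1.nb b).1 hab; grind
    · have := (K.Ls2.nb b).1 hab; grind
    · obtain ⟨w, wB, L⟩ := h.tlink hb1 hb3 K aB
      have := (L.nb b).1 hab; grind
    · obtain ⟨w, wB, L⟩ := (h.swap h.adj_pq).tlink hb1 hb3 (K.swap C) aB
      have := (L.nb b).1 hab; grind

theorem Cy.tB (h : Cy Adj Fc B p q) {c d r1 r2 s1 s2 b1 b3 t t' : V} (hb1 : B b1) (hb3 : B b3)
    (K : Core Adj Fc p q c d r1 r2 s1 s2 b1 b3 t t') : B t := by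
  by_contra ht
  have C := h.toCx
  obtain ⟨w, wB, L⟩ := h.tlink hb1 hb3 K ht
  have hp := h.hp
  have hq := h.hq
  have cB := h.pB c (by rw [K.Lp.nb]; grind)
  have dB := h.pB d (by rw [K.Lp.nb]; grind)
  have r1B := h.pB r1 (by rw [K.Lp.nb]; grind)
  have r2B := h.pB r2 (by rw [K.Lp.nb]; grind)
  have s1B := h.qB s1 (by rw [K.Lq.nb]; grind)
  have s2B := h.qB s2 (by rw [K.Lq.nb]; grind)
  have ndp := K.Lp.nd
  have ndq := K.Lq.nd
  have ndc := K.Lc.nd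
  have ndd := K.Ld.nd
  have nd := L.nd
  have ndr1 := K.Lr1.nd
  have ndr2 := K.Lr2.nd
  have tq : t ≠ q := by
    rintro rfl
    exact h.qB b1 (by rw [L.nb]; grind) hb1
  have ts1 : t ≠ s1 := by
    rintro rfl
    have := (L.nb q).1 (by rw [K.Ls1.nb]; grind)
    grind
  have ts1' : ¬ Adj t s1 := by
    rw [L.nb]
    have e1 : s1 ≠ r1 := by grind
    have e2 : s1 ≠ r2 := by
      rintro rfl
      have := (K.Lr2.nb q).1 (by rw [K.Ls1.nb]; grind)
      grind
    grind
  have hw : ∀ z, ¬ B z → Adj w z → z = t := by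
    intro z zB hz
    have hz := C.symm _ _ hz
    have t'w : t' ≠ w := by
      rintro rfl
      exact ts1 (h.bd b1 t' t s1 hb1 wB (by simp [C.perms L.f5]) (by simp [C.perms K.Ls1.f5]))
    rcases h.all hb1 hb3 K z zB with rfl | rfl | rfl | rfl | rfl | rfl | rfl | rfl | rfl | rfl
    · have := (K.Lp.nb w).1 hz; grind
    · have := (K.Lq.nb w).1 hz; grind
    · have := (K.Lc.nb w).1 hz; grind
    · have := (K.Ld.nb w).1 hz; grind
    · have := (K.Lr1.nb w).1 hz; grind
    · have := (K.Lr2.nb w).1 hz; grind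
    · have := (K.Ls1.nb w).1 hz; grind
    · have := (K.Ls2.nb w).1 hz; grind
    · rfl
    · obtain ⟨w', wB', L'⟩ := (h.swap h.adj_pq).tlink hb1 hb3 (K.swap C) zB
      have : w = w' := by
        have := (L'.nb w).1 hz; grind
      subst this
      exact h.bd b1 w z t hb1 wB (by simp [C.perms L'.f5]) (by simp [C.perms L.f5])
  obtain ⟨z, z', hne, zB, zB', hz, hz'⟩ := h.deg w wB
  exact hne ((hw z zB hz).trans (hw z' zB' hz').symm)

end Abstract

section Concrete
variable {V : Type} [Fintype V] [DecidableEq V] (G : AGraph V)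

/-- boundary predicate -/
def bB (w : V) : Prop := w ∈ boundaryFinset G

/-- ordered face -/
def fF (a b c : V) : Prop := a ≠ b ∧ a ≠ c ∧ b ≠ c ∧ ({a, b, c} : Finset V) ∈ G.faces

open Classical in
/-- adjacency indicator -/
noncomputable def ee (a b : V) : ℕ := if G.graph.Adj a b then 1 else 0

/-- degree -/
noncomputable def dd (a : V) : ℕ := ∑ b, ee G a b

theorem bB_iff (w : V) : bB G w ↔ w = G.u ∨ w = G.x ∨ w = G.v ∨ w = G.y := by
  simp [bB, boundaryFinset]

theorem dists : G.u ≠ G.x ∧ G.u ≠ G.v ∧ G.u ≠ G.y ∧ G.x ≠ G.v ∧ G.x ≠ G.y ∧ G.v ≠ G.y :=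
  ⟨G.adj_ux.ne, G.u_ne_v, G.adj_yu.ne.symm, G.adj_xv.ne, G.x_ne_y, G.adj_vy.ne⟩

theorem ee_comm (a b : V) : ee G a b = ee G b a := by
  classical
  exact if_congr (G.graph.adj_comm a b) rfl rfl

theorem dd_eq (H : AGraph V) (a : V) : (H.graph.neighborSet a).ncard = dd H a := by
  classical
  rw [Set.ncard_eq_toFinset_card']
  simp only [dd, ee]
  rw [← Finset.card_filter]
  congr 1
  ext z; simp

theorem fF_adj {a b c : V} (h : fF G a b c) : G.graph.Adj a b :=
  G.faces_adj _ h.2.2.2 _ (by simp) _ (by simp) h.1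

theorem fF_s1 {a b c : V} (h : fF G a b c) : fF G b a c := by
  refine ⟨h.1.symm, h.2.2.1, h.2.1, ?_⟩
  rw [Finset.insert_comm]; exact h.2.2.2

theorem fF_s2 {a b c : V} (h : fF G a b c) : fF G a c b := by
  refine ⟨h.2.1, h.1, h.2.2.1.symm, ?_⟩
  rw [Finset.pair_comm]; exact h.2.2.2

theorem fF_adj2 {a b c : V} (h : fF G a b c) : G.graph.Adj a c := fF_adj G (fF_s2 G h)
theorem fF_adj3 {a b c : V} (h : fF G a b c) : G.graph.Adj b c := fF_adj2 G (fF_s1 G h)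

open Classical in
theorem card_third (a b : V) (hab : a ≠ b) :
    (Finset.univ.filter fun c => fF G a b c).card =
      (G.faces.filter fun f => a ∈ f ∧ b ∈ f).card := by
  refine Finset.card_bij (fun c _ => {a, b, c}) ?_ ?_ ?_
  · intro c hc
    simp at hc
    simp [hc.2.2.2]
  · intro c hc c' hc' h
    simp at hc hc'
    have : c ∈ ({a, b, c'} : Finset V) := by rw [← h]; simp
    simp at this
    rcases this with h | h | h
    · exact absurd h.symm hc.2.1
    · exact absurd h.symm hc.2.2.1
    · exact h
  · intro f hf
    simp at hf
    have h1 : ({a, b} : Finset V) ⊆ f := by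
      intro z; simp; rintro (rfl | rfl) <;> tauto
    have h2 := Finset.card_sdiff_of_subset h1
    rw [G.faces_card f hf.1, Finset.card_pair hab] at h2
    obtain ⟨c, hc⟩ := Finset.card_eq_one.1 h2
    have hcf : c ∈ f \ {a, b} := by rw [hc]; simp
    simp at hcf
    have e : ({a, b, c} : Finset V) = f := by
      apply Finset.eq_of_subset_of_card_le
      · intro z; simp; rintro (rfl | rfl | rfl) <;> tauto
      · rw [G.faces_card f hf.1]
        rw [Finset.card_eq_three.2 ⟨a, b, c, hab, by tauto, by tauto, rfl⟩]
    refine ⟨c, ?_, e⟩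
    simp
    exact ⟨hab, by tauto, by tauto, by rw [e]; exact hf.1⟩

theorem bpair (a b : V) (hab : G.graph.Adj a b) :
    ({a, b} : Finset V) ∈ ({{G.u, G.x}, {G.x, G.v}, {G.v, G.y}, {G.y, G.u}} : Finset (Finset V))
      ↔ bB G a ∧ bB G b := by
  have n1 := G.not_adj_xy
  have n2 := G.not_adj_uv
  have hne := hab.ne
  have hs := hab.symm
  constructor
  · intro h
    have ha : a ∈ ({a, b} : Finset V) := by simp
    have hb : b ∈ ({a, b} : Finset V) := by simp
    rw [bB_iff, bB_iff]
    simp only [Finset.mem_insert, Finset.mem_singleton] at h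
    rcases h with h | h | h | h <;> rw [h] at ha hb <;> simp at ha hb <;> tauto
  · rintro ⟨ha, hb⟩
    rw [bB_iff] at ha hb
    have pc : ∀ c d : V, ({c, d} : Finset V) = {d, c} := fun c d => Finset.pair_comm _ _
    rcases ha with rfl | rfl | rfl | rfl <;> rcases hb with rfl | rfl | rfl | rfl <;>
      first
      | exact absurd rfl hne
      | exact absurd hab n1
      | exact absurd hs n1
      | exact absurd hab n2
      | exact absurd hs n2
      | simp [pc G.u G.x, pc G.x G.v, pc G.v G.y, pc G.y G.u]

open Classical in
theorem card_third' (a b : V) (hab : G.graph.Adj a b) :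
    (Finset.univ.filter fun c => fF G a b c).card = if bB G a ∧ bB G b then 1 else 2 := by
  rw [card_third G a b hab.ne, G.edge_faces a b hab]
  simp only [bpair G a b hab]

open Classical in
/-- double boundary indicator -/
noncomputable def bbi (a b : V) : ℕ := if bB G a ∧ bB G b then ee G a b else 0

theorem cnt1 : ∑ a, ∑ b, (G.faces.filter fun f => a ≠ b ∧ a ∈ f ∧ b ∈ f).card = 6 * G.faces.card := by
  classical
  have : ∀ a b, (G.faces.filter fun f => a ≠ b ∧ a ∈ f ∧ b ∈ f).card =
      ∑ f ∈ G.faces, if a ≠ b ∧ a ∈ f ∧ b ∈ f then 1 else 0 := fun a b => Finset.card_filter _ _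
  simp only [this]
  rw [← Fintype.sum_prod_type' (f := fun a b => ∑ f ∈ G.faces, if a ≠ b ∧ a ∈ f ∧ b ∈ f then 1 else 0)]
  rw [Finset.sum_comm, mul_comm, ← smul_eq_mul]
  apply Finset.sum_eq_card_nsmul
  intro f hf
  have h3 := G.faces_card f hf
  have : f.offDiag.card = 6 := by rw [Finset.offDiag_card, h3]
  rw [← this, ← Finset.card_filter]
  congr 1
  ext ⟨a, b⟩
  simp
  tauto

theorem cnt2 (a b : V) : (G.faces.filter fun f => a ≠ b ∧ a ∈ f ∧ b ∈ f).card + bbi G a b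
    = 2 * ee G a b := by
  classical
  by_cases hab : G.graph.Adj a b
  · have h1 := G.edge_faces a b hab
    simp only [bpair G a b hab] at h1
    have h2 : (G.faces.filter fun f => a ≠ b ∧ a ∈ f ∧ b ∈ f)
      = (G.faces.filter fun f => a ∈ f ∧ b ∈ f) := by
      apply Finset.filter_congr
      intro f hf
      have := hab.ne
      tauto
    rw [h2, h1]
    simp only [bbi, ee, hab, if_true]
    split_ifs <;> rfl
  · simp only [bbi, ee, hab, if_false]
    have : (G.faces.filter fun f => a ≠ b ∧ a ∈ f ∧ b ∈ f) = ∅ := by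
      apply Finset.filter_eq_empty_iff.2
      rintro f hf ⟨h1, h2, h3⟩
      exact hab (G.faces_adj f hf a h2 b h3 h1)
    simp [this]

theorem sumB (f : V → ℕ) : ∑ b ∈ boundaryFinset G, f b = f G.u + f G.x + f G.v + f G.y := by
  obtain ⟨h1, h2, h3, h4, h5, h6⟩ := dists G
  rw [boundaryFinset, Finset.sum_insert (by simp; tauto), Finset.sum_insert (by simp; tauto),
    Finset.sum_insert (by simp; tauto), Finset.sum_singleton]
  ring

theorem ee_vals : ee G G.u G.x = 1 ∧ ee G G.x G.v = 1 ∧ ee G G.v G.y = 1 ∧ ee G G.y G.u = 1 ∧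
    ee G G.x G.y = 0 ∧ ee G G.u G.v = 0 ∧ ∀ a, ee G a a = 0 := by
  simp [ee, G.adj_ux, G.adj_xv, G.adj_vy, G.adj_yu, G.not_adj_xy, G.not_adj_uv]

theorem cnt3 : ∑ a ∈ boundaryFinset G, ∑ b ∈ boundaryFinset G, ee G a b = 8 := by
  obtain ⟨h1, h2, h3, h4, h5, h6, h7⟩ := ee_vals G
  simp only [sumB, h7]
  have := ee_comm G G.u G.x
  have := ee_comm G G.x G.v
  have := ee_comm G G.v G.y
  have := ee_comm G G.y G.u
  have := ee_comm G G.x G.y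
  have := ee_comm G G.u G.v
  omega

theorem cnt4 : ∑ a, ∑ b, bbi G a b = 8 := by
  classical
  rw [← cnt3 G]
  rw [← Finset.sum_subset (Finset.subset_univ (boundaryFinset G))]
  · apply Finset.sum_congr rfl
    intro a ha
    rw [← Finset.sum_subset (Finset.subset_univ (boundaryFinset G))]
    · apply Finset.sum_congr rfl
      intro b hb
      simp [bbi, bB, ha, hb]
    · intro b _ hb
      simp [bbi, bB, hb]
  · intro a _ ha
    simp [bbi, bB, ha]

theorem cnt5 : ∑ a, dd G a = 2 * G.graph.edgeSet.ncard := by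
  classical
  rw [Set.ncard_eq_toFinset_card']
  have := G.graph.sum_degrees_eq_twice_card_edges
  rw [SimpleGraph.edgeFinset] at this
  rw [← this]
  apply Finset.sum_congr rfl
  intro a _
  rw [← dd_eq, Set.ncard_eq_toFinset_card']
  rfl

theorem cnt6 : ∑ a, dd G a + 14 = 6 * Fintype.card V := by
  have h1 := cnt1 G
  have h4 := cnt4 G
  have h5 := cnt5 G
  have : ∑ a, ∑ b, ((G.faces.filter fun f => a ≠ b ∧ a ∈ f ∧ b ∈ f).card + bbi G a b)
      = 2 * ∑ a, dd G a := by
    simp only [cnt2, dd, Finset.mul_sum]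
  simp only [Finset.sum_add_distrib, h1, h4] at this
  have := G.euler
  omega

/-- number of boundary neighbours -/
noncomputable def al (a : V) : ℕ := ee G a G.u + ee G a G.x + ee G a G.v + ee G a G.y

theorem int_card : (interiorFinset G).card + 4 = Fintype.card V := by
  have h : (boundaryFinset G).card = 4 := by
    obtain ⟨h1, h2, h3, h4, h5, h6⟩ := dists G
    simp [boundaryFinset, *]
  have := Finset.card_sdiff_add_card_eq_card (Finset.subset_univ (boundaryFinset G))
  rw [h] at this
  exact this

theorem cnt7 : ∑ a ∈ interiorFinset G, (al G a + dd G a) = 6 * (interiorFinset G).card + 2 := by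
  have h6 := cnt6 G
  have hc := int_card G
  have h0 : ∀ f : V → ℕ, ∑ a, f a = ∑ a ∈ interiorFinset G, f a + ∑ a ∈ boundaryFinset G, f a := by
    intro f
    rw [interiorFinset, Finset.sum_sdiff (Finset.subset_univ _)]
  rw [h0] at h6
  have h1 : ∑ a ∈ boundaryFinset G, dd G a = ∑ a ∈ interiorFinset G, al G a + 8 := by
    simp only [dd]
    simp only [h0 (fun b => ee G _ b)]
    rw [Finset.sum_add_distrib, cnt3, Finset.sum_comm]
    simp only [sumB, al]
    congr 1
    apply Finset.sum_congr rfl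
    intro a _
    simp only [ee_comm G a]
  rw [Finset.sum_add_distrib]
  omega

open Classical in
/-- ear indicator -/
noncomputable def fi (a b c : V) : ℕ := if fF G a b c then 1 else 0

/-- number of ears -/
noncomputable def jj (a : V) : ℕ :=
  fi G G.u G.x a + fi G G.x G.v a + fi G G.v G.y a + fi G G.y G.u a

theorem noTri {a b c : V} (h1 : G.graph.Adj a b) (h2 : G.graph.Adj a c) (h3 : G.graph.Adj b c)
    (ha : bB G a) (hb : bB G b) : ¬ bB G c := by
  intro hc
  have n1 := G.not_adj_xy
  have n2 := G.not_adj_uv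
  have n1' : ¬ G.graph.Adj G.y G.x := fun h => n1 h.symm
  have n2' : ¬ G.graph.Adj G.v G.u := fun h => n2 h.symm
  have i : ∀ a, ¬ G.graph.Adj a a := fun a => G.graph.loopless.irrefl a
  rw [bB_iff] at ha hb hc
  rcases ha with rfl | rfl | rfl | rfl <;> rcases hb with rfl | rfl | rfl | rfl <;>
    first
    | exact absurd h1 (by first | assumption | exact i _)
    | (rcases hc with rfl | rfl | rfl | rfl <;>
        first
        | exact absurd h2 (by first | assumption | exact i _)
        | exact absurd h3 (by first | assumption | exact i _))

theorem noBBB {a b c : V} (h : fF G a b c) (ha : bB G a) (hb : bB G b) : ¬ bB G c :=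
  noTri G (fF_adj G h) (fF_adj2 G h) (fF_adj3 G h) ha hb

theorem sum_fi (a b : V) (ha : bB G a) (hb : bB G b) (hab : G.graph.Adj a b) :
    ∑ c ∈ interiorFinset G, fi G a b c = 1 := by
  classical
  have h := card_third' G a b hab
  simp only [ha, hb, and_self, if_true] at h
  rw [Finset.card_filter] at h
  rw [← h]
  apply Finset.sum_subset (Finset.subset_univ _)
  intro c _ hc
  rw [fi, if_neg]
  intro hf
  apply hc
  rw [interiorFinset, Finset.mem_sdiff]
  exact ⟨Finset.mem_univ _, noBBB G hf ha hb⟩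

theorem bu : bB G G.u := by simp [bB_iff]
theorem bx : bB G G.x := by simp [bB_iff]
theorem bv : bB G G.v := by simp [bB_iff]
theorem byy : bB G G.y := by simp [bB_iff]

theorem sum_jj : ∑ c ∈ interiorFinset G, jj G c = 4 := by
  simp only [jj, Finset.sum_add_distrib, sum_fi G _ _ (bu G) (bx G) G.adj_ux,
    sum_fi G _ _ (bx G) (bv G) G.adj_xv, sum_fi G _ _ (bv G) (byy G) G.adj_vy,
    sum_fi G _ _ (byy G) (bu G) G.adj_yu]

theorem fF_perms {a b c : V} (f : fF G a b c) :
    fF G a b c ∧ fF G a c b ∧ fF G b a c ∧ fF G b c a ∧ fF G c a b ∧ fF G c b a := by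
  have f1 := fF_s1 G f
  have f2 := fF_s2 G f
  exact ⟨f, f2, f1, fF_s2 G f1, fF_s1 G f2, fF_s1 G (fF_s2 G f1)⟩

theorem mem_int (w : V) : w ∈ interiorFinset G ↔ ¬ bB G w := by
  simp [interiorFinset, bB]

theorem parent (h : Internally6aConnected G) : ∃ T : SimpleGraph V, G.graph ≤ T ∧
    (∀ a b, T.Adj a b → G.graph.Adj a b ∨ (bB G a ∧ bB G b)) ∧ (∀ w, 5 ≤ vdeg T w) ∧
    ¬ HasSeparatingCycle T 4 := by
  obtain ⟨T, hT, h5, _, h4, _⟩ := h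
  refine ⟨T.graph, ?_, ?_, h5, h4⟩
  · rcases hT with h | h <;> rw [h]
    · exact le_sup_left
    · exact le_sup_left
  · intro a b hab
    rcases hT with h | h <;> rw [h] at hab
    · simp only [parentXYGraph, SimpleGraph.sup_adj, SimpleGraph.fromEdgeSet_adj,
        Set.mem_singleton_iff, Sym2.eq_iff] at hab
      simp only [bB_iff]
      tauto
    · simp only [parentUVGraph, SimpleGraph.sup_adj, SimpleGraph.fromEdgeSet_adj,
        Set.mem_singleton_iff, Sym2.eq_iff] at hab
      simp only [bB_iff]
      tauto

theorem deg5 (h : Internally6aConnected G) (w : V) (hw : ¬ bB G w) : 5 ≤ dd G w := by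
  obtain ⟨T, _, h1, h5, _⟩ := parent G h
  refine (h5 w).trans ?_
  rw [← dd_eq]
  apply Set.ncard_le_ncard
  · intro z hz
    have := h1 w z hz
    simp only [SimpleGraph.mem_neighborSet]
    tauto
  · exact Set.toFinite _

theorem degB (h : Internally6aConnected G) (b : V) (hb : bB G b) :
    ∃ z z', z ≠ z' ∧ ¬ bB G z ∧ ¬ bB G z' ∧ G.graph.Adj b z ∧ G.graph.Adj b z' := by
  classical
  obtain ⟨T, _, h1, h5, _⟩ := parent G h
  have h5 := h5 b
  rw [vdeg, Set.ncard_eq_toFinset_card'] at h5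
  have hs : (T.neighborSet b).toFinset ⊆ ((boundaryFinset G).erase b) ∪
      (Finset.univ.filter fun z => ¬ bB G z ∧ G.graph.Adj b z) := by
    intro z hz
    simp at hz
    have := h1 b z hz
    have := hz.ne
    simp only [Finset.mem_union, Finset.mem_erase, Finset.mem_filter, Finset.mem_univ, true_and]
    by_cases hzB : bB G z
    · left; exact ⟨this.symm, hzB⟩
    · right; tauto
  have h6 := (Finset.card_le_card hs).trans (Finset.card_union_le _ _)
  have h4 : (boundaryFinset G).card ≤ 4 := by
    exact Finset.card_le_four
  have : ((boundaryFinset G).erase b).card = (boundaryFinset G).card - 1 := Finset.card_erase_of_mem hb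
  have : 1 < (Finset.univ.filter fun z => ¬ bB G z ∧ G.graph.Adj b z).card := by omega
  obtain ⟨z, hz, z', hz', hne⟩ := Finset.one_lt_card.1 this
  simp at hz hz'
  exact ⟨z, z', hne, hz.1, hz'.1, hz.2, hz'.2⟩

theorem connB (h : Internally6aConnected G) (p : V) (hp : ¬ bB G p) (S : V → Prop) (hS : S p)
    (hc : ∀ a b, S a → ¬ bB G a → ¬ bB G b → G.graph.Adj a b → S b) (w : V) (hw : ¬ bB G w) :
    S w := by
  obtain ⟨T, hle, h1, _, h4⟩ := parent G h
  by_contra hcon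
  apply h4
  obtain ⟨e1, e2, e3, e4, e5, e6⟩ := dists G
  let P : T.Walk G.u G.u := .cons (hle G.adj_ux) (.cons (hle G.adj_xv) (.cons (hle G.adj_vy)
    (.cons (hle G.adj_yu) .nil)))
  have hsup : ∀ z, z ∈ P.support ↔ bB G z := by
    intro z
    simp only [P, SimpleGraph.Walk.support_cons, SimpleGraph.Walk.support_nil, bB_iff]
    simp
    tauto
  refine ⟨G.u, P, ?_, rfl, p, w, ?_, ?_, ?_⟩
  · rw [SimpleGraph.Walk.isCycle_def, SimpleGraph.Walk.isTrail_def]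
    refine ⟨?_, by simp [P], ?_⟩
    · simp [P, SimpleGraph.Walk.edges_cons]
      grind
    · simp [P, SimpleGraph.Walk.support_cons]
      grind
  · simpa [hsup] using hp
  · simpa [hsup] using hw
  · rintro ⟨W, hW⟩
    have hW' : ∀ z ∈ W.support, ¬ bB G z := by
      intro z hz
      simpa [hsup] using hW z hz
    have key : ∀ {a b : V} (W : T.Walk a b), (∀ z ∈ W.support, ¬ bB G z) → S a → S b := by
      intro a b W
      induction W with
      | nil => intro _ h; exact h
      | cons hadj W ih =>
        intro hz ha
        apply ih (fun z hzz => hz z (by simp [hzz]))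
        have na := hz _ (SimpleGraph.Walk.start_mem_support _)
        refine hc _ _ ha na (hz _ (by simp)) ?_
        rcases h1 _ _ hadj with h | h
        · exact h
        · exact absurd h.1 na
    exact hcon (key W hW' hS)

open Classical in
theorem twoF (w a : V) (hw : ¬ bB G w) (ha : G.graph.Adj w a) : ∃ b c, b ≠ c ∧ fF G w a b ∧
    fF G w a c ∧ ∀ d, fF G w a d → d = b ∨ d = c := by
  have h := card_third' G w a ha
  simp only [hw, false_and, if_false] at h
  obtain ⟨b, c, hbc, hs⟩ := Finset.card_eq_two.1 h
  have : ∀ d, fF G w a d ↔ d = b ∨ d = c := by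
    intro d
    have : d ∈ (Finset.univ.filter fun c => fF G w a c) ↔ d ∈ ({b, c} : Finset V) := by rw [hs]
    simpa using this
  exact ⟨b, c, hbc, (this b).2 (by simp), (this c).2 (by simp), fun d => (this d).1⟩

theorem bdF (b b' r r' : V) (hb : bB G b) (hb' : bB G b') (h1 : fF G b b' r) (h2 : fF G b b' r') :
    r = r' := by
  classical
  have h := card_third' G b b' (fF_adj G h1)
  simp only [hb, hb', and_self, if_true] at h
  exact Finset.card_le_one.1 h.le r (by simpa using h1) r' (by simpa using h2)

theorem card_le_dd (a : V) (s : Finset V) (hs : ∀ z ∈ s, G.graph.Adj a z) : s.card ≤ dd G a := by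
  rw [← dd_eq, ← Set.ncard_coe_finset]
  exact Set.ncard_le_ncard hs (Set.toFinite _)

theorem j4 (h : Internally6aConnected G) (a : V) (ha : ¬ bB G a) (h1 : fF G G.u G.x a)
    (h2 : fF G G.x G.v a) (h3 : fF G G.v G.y a) (h4 : fF G G.y G.u a) : 7 ≤ dd G a := by
  classical
  have h5 := deg5 G h a ha
  obtain ⟨e1, e2, e3, e4, e5, e6⟩ := dists G
  have : ∃ z, G.graph.Adj a z ∧ ¬ bB G z := by
    by_contra hcon
    push Not at hcon
    have : dd G a ≤ 4 := by
      rw [← dd_eq]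
      have : (G.graph.neighborSet a) ⊆ (boundaryFinset G : Set V) := fun z hz => hcon z hz
      refine (Set.ncard_le_ncard this (Set.toFinite _)).trans ?_
      rw [Set.ncard_coe_finset]
      exact Finset.card_le_four
    omega
  obtain ⟨z, haz, hz⟩ := this
  have hB : ∀ b c d, fF G b c a → fF G b d a → c ≠ d → bB G c → bB G d →
      ∀ s, fF G a b s → bB G s := by
    intro b c d f f' hcd hc hd s hs
    obtain ⟨x, y, hxy, _, _, k⟩ := twoF G a b ha (fF_adj2 G f).symm
    have k1 := k c (by simp [fF_perms G f])
    have k2 := k d (by simp [fF_perms G f'])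
    have k3 := k s hs
    have : s = c ∨ s = d := by grind
    rcases this with rfl | rfl <;> assumption
  have hN : ∀ s, fF G a z s → ¬ bB G s := by
    intro s hs hsB
    apply hz
    have hs' : fF G a s z := fF_s2 G hs
    rcases (bB_iff G s).1 hsB with rfl | rfl | rfl | rfl
    · exact hB _ G.x G.y h1 (by simp [fF_perms G h4]) e5 (bx G) (byy G) z hs'
    · exact hB _ G.u G.v (by simp [fF_perms G h1]) h2 e2 (bu G) (bv G) z hs'
    · exact hB _ G.x G.y (by simp [fF_perms G h2]) h3 e5 (bx G) (byy G) z hs'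
    · exact hB _ G.v G.u (by simp [fF_perms G h3]) h4 e2.symm (bv G) (bu G) z hs'
  obtain ⟨s, t, hst, fs, ft, _⟩ := twoF G a z ha haz
  have hsB := hN s fs
  have htB := hN t ft
  have zs := (fF_adj3 G fs).ne
  have zt := (fF_adj3 G ft).ne
  have := card_le_dd G a (boundaryFinset G ∪ {z, s, t}) (by
    intro w hw
    rw [Finset.mem_union] at hw
    rcases hw with hw | hw
    · rcases (bB_iff G w).1 hw with rfl | rfl | rfl | rfl
      · exact (fF_adj2 G h1).symm
      · exact (fF_adj2 G h2).symm
      · exact (fF_adj2 G h3).symm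
      · exact (fF_adj2 G h4).symm
    · simp at hw
      rcases hw with rfl | rfl | rfl
      · exact haz
      · exact fF_adj2 G fs
      · exact fF_adj2 G ft)
  rw [Finset.card_union_of_disjoint] at this
  · have h4 : (boundaryFinset G).card = 4 := by simp [boundaryFinset, *]
    have h3 : ({z, s, t} : Finset V).card = 3 := Finset.card_eq_three.2 ⟨z, s, t, zs, zt, hst, rfl⟩
    omega
  · rw [Finset.disjoint_left]
    intro w hw hw'
    simp at hw'
    rcases hw' with rfl | rfl | rfl
    · exact hz hw
    · exact hsB hw
    · exact htB hw

theorem al_bound (a : V) (ha : 1 ≤ al G a) : jj G a ≤ 3 ∧ jj G a + 1 ≤ al G a ∨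
    (jj G a = 4 ∧ al G a = 4 ∧ fF G G.u G.x a ∧ fF G G.x G.v a ∧ fF G G.v G.y a ∧ fF G G.y G.u a) := by
  have k : ∀ b c, fF G b c a → G.graph.Adj a b ∧ G.graph.Adj a c := fun b c f =>
    ⟨(fF_adj2 G f).symm, (fF_adj3 G f).symm⟩
  have k1 := k G.u G.x
  have k2 := k G.x G.v
  have k3 := k G.v G.y
  have k4 := k G.y G.u
  unfold al ee at *
  unfold jj fi
  by_cases h1 : fF G G.u G.x a <;> by_cases h2 : fF G G.x G.v a <;> by_cases h3 : fF G G.v G.y a <;>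
    by_cases h4 : fF G G.y G.u a <;>
    simp only [h1, h2, h3, h4, true_imp_iff, if_true, if_false, and_true, and_false] at * <;>
    simp [k1, k2, k3, k4] <;> (try split_ifs) <;> (try omega) <;> (try simp_all)

theorem fam (n : ℕ) (hn : InFamilyG G 2 n) : ∃ p q, p ≠ q ∧ ¬ bB G p ∧
    ¬ bB G q ∧ (∀ b, G.graph.Adj p b → ¬ bB G b) ∧ (∀ b, G.graph.Adj q b → ¬ bB G b) ∧
    (∀ w, ¬ bB G w → w ≠ p → w ≠ q → ∃ b, bB G b ∧ G.graph.Adj w b) ∧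
    (interiorFinset G).card = n + 2 := by
  obtain ⟨hn, h2⟩ := hn
  have hsub : innerRingFinset G ⊆ interiorFinset G := by
    classical
    unfold innerRingFinset
    exact Finset.filter_subset _ _
  have hcard := Finset.card_sdiff_add_card_eq_card hsub
  obtain ⟨p, q, hpq, hs⟩ := Finset.card_eq_two.1 h2
  have hm : ∀ z, (¬ bB G z ∧ ∀ b, bB G b → ¬ G.graph.Adj z b) ↔ z = p ∨ z = q := by
    intro z
    have : z ∈ interiorFinset G \ innerRingFinset G ↔ z ∈ ({p, q} : Finset V) := by rw [hs]
    simp only [Finset.mem_sdiff, mem_int, innerRingFinset, Finset.mem_filter, Finset.mem_insert,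
      Finset.mem_singleton, not_and, not_exists] at this
    rw [← this]
    simp only [bB]
    tauto
  have hp := (hm p).2 (by simp)
  have hq := (hm q).2 (by simp)
  refine ⟨p, q, hpq, hp.1, hq.1, fun b hb hB => hp.2 b hB hb, fun b hb hB => hq.2 b hB hb, ?_, by omega⟩
  intro w hw h1 h2
  by_contra hcon
  push Not at hcon
  have := (hm w).1 ⟨hw, hcon⟩
  tauto

theorem al_pos (a b : V) (hb : bB G b) (hab : G.graph.Adj a b) : 1 ≤ al G a := by
  have : ee G a b = 1 := by simp [ee, hab]
  unfold al
  rcases (bB_iff G b).1 hb with rfl | rfl | rfl | rfl <;> omega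

theorem al_zero (a : V) (ha : ∀ b, G.graph.Adj a b → ¬ bB G b) : al G a = 0 ∧ jj G a = 0 := by
  have k : ∀ b, bB G b → ¬ G.graph.Adj a b := fun b hb hab => ha b hab hb
  have k1 := k _ (bu G)
  have k2 := k _ (bx G)
  have k3 := k _ (bv G)
  have k4 := k _ (byy G)
  have f : ∀ b c, ¬ G.graph.Adj a b → ¬ fF G b c a := fun b c h1 h2 => h1 (fF_adj2 G h2).symm
  simp [al, jj, ee, fi, k1, k2, k3, k4, f]

theorem main_count (h : Internally6aConnected G) {p q : V} (hpq : p ≠ q) (hp : ¬ bB G p)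
    (hq : ¬ bB G q) (pB : ∀ b, G.graph.Adj p b → ¬ bB G b) (qB : ∀ b, G.graph.Adj q b → ¬ bB G b)
    (hR : ∀ w, ¬ bB G w → w ≠ p → w ≠ q → ∃ b, bB G b ∧ G.graph.Adj w b) (w : V) (hw : ¬ bB G w) :
    dd G w = 5 ∧ ((∃ b, bB G b ∧ G.graph.Adj w b) → al G w = jj G w + 1) := by
  have h7 := cnt7 G
  have hj := sum_jj G
  have bd1 : ∀ a, a ≠ p → a ≠ q → ¬ bB G a → jj G a + 6 ≤ al G a + dd G a ∧
      (jj G a + 6 = al G a + dd G a → dd G a = 5 ∧ al G a = jj G a + 1) := by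
    intro a h1 h2 ha
    obtain ⟨b, hb, hab⟩ := hR a ha h1 h2
    have := deg5 G h a ha
    rcases al_bound G a (al_pos G a b hb hab) with h3 | ⟨h3, h4, f1, f2, f3, f4⟩
    · omega
    · have := j4 G h a ha f1 f2 f3 f4
      omega
  have bp : al G p = 0 ∧ jj G p = 0 := al_zero G p pB
  have bq : al G q = 0 ∧ jj G q = 0 := al_zero G q qB
  have dp := deg5 G h p hp
  have dq := deg5 G h q hq
  have hle : ∀ a ∈ interiorFinset G, jj G a + 6 ≤
      al G a + dd G a + (if a = p then 1 else 0) + (if a = q then 1 else 0) := by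
    intro a ha
    rw [mem_int] at ha
    by_cases h1 : a = p
    · subst h1; simp; omega
    · by_cases h2 : a = q
      · subst h2; simp; omega
      · have := (bd1 a h1 h2 ha).1
        simp [h1, h2, this]
  have hsum : ∑ a ∈ interiorFinset G, (jj G a + 6) = ∑ a ∈ interiorFinset G,
      (al G a + dd G a + (if a = p then 1 else 0) + (if a = q then 1 else 0)) := by
    rw [Finset.sum_add_distrib, Finset.sum_add_distrib, Finset.sum_add_distrib, h7, hj,
      Finset.sum_ite_eq', Finset.sum_ite_eq', if_pos ((mem_int G p).2 hp),
      if_pos ((mem_int G q).2 hq), Finset.sum_const]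
    simp
    omega
  have heq := (Finset.sum_eq_sum_iff_of_le hle).1 hsum w ((mem_int G w).2 hw)
  by_cases h1 : w = p
  · subst h1
    simp [hpq] at heq
    refine ⟨by omega, ?_⟩
    rintro ⟨b, hb, hab⟩
    exact absurd hb (pB b hab)
  · by_cases h2 : w = q
    · subst h2
      simp [hpq.symm] at heq
      refine ⟨by omega, ?_⟩
      rintro ⟨b, hb, hab⟩
      exact absurd hb (qB b hab)
    · simp [h1, h2] at heq
      have := (bd1 w h1 h2 hw).2 heq
      exact ⟨this.1, fun _ => this.2⟩

theorem al_two (a b b' : V) (hb : bB G b) (hb' : bB G b') (hne : b ≠ b') (hab : G.graph.Adj a b)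
    (hab' : G.graph.Adj a b') : 2 ≤ al G a := by
  have h1 : ee G a b = 1 := by simp [ee, hab]
  have h2 : ee G a b' = 1 := by simp [ee, hab']
  unfold al
  rcases (bB_iff G b).1 hb with rfl | rfl | rfl | rfl <;>
    rcases (bB_iff G b').1 hb' with rfl | rfl | rfl | rfl <;>
    first | omega | exact absurd rfl hne

theorem getCy (h : Internally6aConnected G) {p q : V} (hpq : p ≠ q) (hp : ¬ bB G p)
    (hq : ¬ bB G q) (pB : ∀ b, G.graph.Adj p b → ¬ bB G b) (qB : ∀ b, G.graph.Adj q b → ¬ bB G b)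
    (hR : ∀ w, ¬ bB G w → w ≠ p → w ≠ q → ∃ b, bB G b ∧ G.graph.Adj w b) :
    Cy G.graph.Adj (fF G) (bB G) p q := by
  classical
  have M := main_count G h hpq hp hq pB qB hR
  have C : Cx G.graph.Adj (fF G) (bB G) :=
    { symm := fun a b h => h.symm
      s1 := fun a b c => fF_s1 G
      s2 := fun a b c => fF_s2 G
      adj := fun a b c => fF_adj G
      ne := fun a b h => h.ne
      two := fun w a => twoF G w a
      nb := by
        intro w hw
        refine ⟨(G.graph.neighborSet w).toFinset, ?_, by simp⟩
        rw [← Set.ncard_eq_toFinset_card', dd_eq]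
        exact (M w hw).1 }
  refine { C with
    hp := hp
    hq := hq
    hpq := hpq
    pB := pB
    qB := qB
    hR := hR
    ear := ?_
    bd := bdF G
    conn := fun S h1 h2 w hw => connB G h p hp S h1 h2 w hw
    deg := degB G h }
  intro t b r r' b' w ht L hb hb' hr hr'
  by_contra hw
  have nd := L.nd
  have tb : G.graph.Adj t b := by rw [L.nb]; simp
  have tb' : G.graph.Adj t b' := by rw [L.nb]; simp
  have hal := (M t ht).2 ⟨b, hb, tb⟩
  have h2 := al_two G t b b' hb hb' (by tauto) tb tb'
  have nof : ¬ fF G t b b' := by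
    intro f
    rcases C.uniq ht L.f1 (fF_s2 G L.f5) (by tauto) f with rfl | rfl
    · exact hr hb'
    · exact hw hb'
  have key : ∀ c d, bB G c → bB G d → ¬ fF G c d t := by
    intro c d hc hd f
    have e1 := (L.nb c).1 (fF_adj2 G f).symm
    have e2 := (L.nb d).1 (fF_adj3 G f).symm
    have hcd := f.1
    have e1' : c = b ∨ c = b' := by
      rcases e1 with rfl | rfl | rfl | rfl | rfl <;> tauto
    have e2' : d = b ∨ d = b' := by
      rcases e2 with rfl | rfl | rfl | rfl | rfl <;> tauto
    apply nof
    rcases e1' with rfl | rfl <;> rcases e2' with rfl | rfl <;>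
      first | exact absurd rfl hcd | simp [fF_perms G f]
  have : jj G t = 0 := by
    have k1 := key _ _ (bu G) (bx G)
    have k2 := key _ _ (bx G) (bv G)
    have k3 := key _ _ (bv G) (byy G)
    have k4 := key _ _ (byy G) (bu G)
    simp [jj, fi, k1, k2, k3, k4]
  omega

end Concrete

instance gstarDec : DecidableRel gstarG.Adj := fun i j =>
  decidable_of_iff (((s(i, j) : Sym2 (Fin 12)) ∈ ([s(0, 1), s(0, 2), s(0, 3), s(0, 4), s(0, 5),
     s(1, 2), s(2, 3), s(3, 4), s(4, 5), s(5, 1),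
     s(11, 6), s(11, 7), s(11, 8), s(11, 9), s(11, 10),
     s(6, 7), s(7, 8), s(8, 9), s(9, 10), s(10, 6),
     s(1, 6), s(1, 10), s(2, 6), s(2, 7), s(3, 7),
     s(3, 8), s(4, 8), s(4, 9), s(5, 9), s(5, 10)] : List (Sym2 (Fin 12))) ∧ i ≠ j) ∧
      s(i, j) ≠ (s(0, 1) : Sym2 (Fin 12)))
    (by simp only [gstarG, icosG, SimpleGraph.deleteEdges_adj, SimpleGraph.fromEdgeSet_adj,
          Set.mem_insert_iff, Set.mem_singleton_iff, List.mem_cons, List.not_mem_nil, or_false, ne_eq])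

theorem lk_row {V : Type} {Adj : V → V → Prop} {Fc : V → V → V → Prop} {f : Fin 12 → V}
    (hf : Function.Injective f) (i a b c d e : Fin 12)
    (L : Lk Adj Fc (f i) (f a) (f b) (f c) (f d) (f e))
    (ht : ∀ j, gstarG.Adj i j ↔ j = a ∨ j = b ∨ j = c ∨ j = d ∨ j = e) :
    ∀ j, Adj (f i) (f j) ↔ gstarG.Adj i j := by
  intro j
  rw [L.nb, ht]
  simp [hf.eq_iff]

set_option maxHeartbeats 4000000 in
theorem final_iso {V : Type} [Fintype V] [DecidableEq V] (G : AGraph V) {p q : V}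
    (h : Cy G.graph.Adj (fF G) (bB G) p q) : Nonempty (G.graph ≃g gstarG) := by
  obtain ⟨c, d, r1, r2, s1, s2, b1, b3, b2, b4, hb1, hb3, K⟩ := h.core
  have C := h.toCx
  have hb2 := h.tB hb1 hb3 K
  have hb4 := (h.swap h.adj_pq).tB hb1 hb3 (K.swap C)
  have hp := h.hp
  have hq := h.hq
  have cB := h.pB c (by rw [K.Lp.nb]; grind)
  have dB := h.pB d (by rw [K.Lp.nb]; grind)
  have r1B := h.pB r1 (by rw [K.Lp.nb]; grind)
  have r2B := h.pB r2 (by rw [K.Lp.nb]; grind)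
  have s1B := h.qB s1 (by rw [K.Lq.nb]; grind)
  have s2B := h.qB s2 (by rw [K.Lq.nb]; grind)
  have ndp := K.Lp.nd
  have ndq := K.Lq.nd
  have ndc := K.Lc.nd
  have ndd := K.Ld.nd
  have ndr1 := K.Lr1.nd
  have ndr2 := K.Lr2.nd
  have nds1 := K.Ls1.nd
  have nds2 := K.Ls2.nd
  have hpq := h.hpq
  have a12 : G.graph.Adj b1 b2 := (C.adj3 K.Lr1.f5).symm
  have a23 : G.graph.Adj b2 b3 := C.adj3 K.Lr2.f5
  have a14 : G.graph.Adj b1 b4 := (C.adj3 K.Ls1.f5).symm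
  have a43 : G.graph.Adj b4 b3 := C.adj3 K.Ls2.f5
  have n13 : b1 ≠ b3 := by
    rintro rfl
    have := h.bd b1 b2 r1 r2 hb1 hb2 (by simp [C.perms K.Lr1.f5]) (by simp [C.perms K.Lr2.f5])
    exact ndp.2.2.2.2.2.2.2.2.2 this.symm
  have n24 : b2 ≠ b4 := by
    rintro rfl
    have := h.bd b1 b2 r1 s1 hb1 hb2 (by simp [C.perms K.Lr1.f5]) (by simp [C.perms K.Ls1.f5])
    exact ndc.2.2.1 this
  have x13 : ¬ G.graph.Adj b1 b3 := fun ha => noTri G a12 ha a23 hb1 hb2 hb3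
  have x24 : ¬ G.graph.Adj b2 b4 := fun ha => noTri G a12 a14 ha hb1 hb2 hb4
  have m12 := a12.ne
  have m23 := a23.ne
  have m14 := a14.ne
  have m43 := a43.ne
  have r1s2 : r1 ≠ s2 := by
    rintro rfl
    have := (K.Lr1.nb q).1 (by rw [K.Ls2.nb]; grind)
    grind
  have r2s1 : r2 ≠ s1 := by
    rintro rfl
    have := (K.Lr2.nb q).1 (by rw [K.Ls1.nb]; grind)
    grind
  let f : Fin 12 → V := ![b2, b4, b1, r1, r2, b3, s1, c, p, d, s2, q]
  have hne : ∀ a b, bB G a → ¬ bB G b → a ≠ b := by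
    rintro a b h1 h2 rfl
    exact h2 h1
  have pne : ∀ z, G.graph.Adj p z → p ≠ z := fun z hz => hz.ne
  have qne : ∀ z, G.graph.Adj q z → q ≠ z := fun z hz => hz.ne
  have p1 := pne r1 (by rw [K.Lp.nb]; grind)
  have p2 := pne r2 (by rw [K.Lp.nb]; grind)
  have q1 := qne s1 (by rw [K.Lq.nb]; grind)
  have q2 := qne s2 (by rw [K.Lq.nb]; grind)
  have hinj : Function.Injective f := by
    have nodup : [b2, b4, b1, r1, r2, b3, s1, c, p, d, s2, q].Nodup := by
      simp only [List.nodup_cons, List.mem_cons, List.not_mem_nil, or_false, not_or,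
        List.nodup_nil, not_false_eq_true, and_true]
      refine ⟨⟨?_, ?_, ?_, ?_, ?_, ?_, ?_, ?_, ?_, ?_, ?_⟩, ⟨?_, ?_, ?_, ?_, ?_, ?_, ?_, ?_, ?_, ?_⟩,
        ⟨?_, ?_, ?_, ?_, ?_, ?_, ?_, ?_, ?_⟩, ⟨?_, ?_, ?_, ?_, ?_, ?_, ?_, ?_⟩,
        ⟨?_, ?_, ?_, ?_, ?_, ?_, ?_⟩, ⟨?_, ?_, ?_, ?_, ?_, ?_⟩, ⟨?_, ?_, ?_, ?_, ?_⟩,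
        ⟨?_, ?_, ?_, ?_⟩, ⟨?_, ?_, ?_⟩, ⟨?_, ?_⟩, ?_⟩ <;>
      first
      | (apply hne <;> assumption)
      | (apply Ne.symm; apply hne <;> assumption)
      | (clear hne pne qne; grind)
    exact List.nodup_ofFn.1 nodup
  have hsurj : Function.Surjective f := by
    intro z
    by_cases hz : bB G z
    · have e : ({b1, b2, b3, b4} : Finset V) = boundaryFinset G := by
        apply Finset.eq_of_subset_of_card_le
        · intro w
          simp only [Finset.mem_insert, Finset.mem_singleton]
          rintro (rfl | rfl | rfl | rfl) <;> assumption
        · have h4 : (boundaryFinset G).card ≤ 4 := Finset.card_le_four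
          have : ({b1, b2, b3, b4} : Finset V).card = 4 := by
            simp [m12, n13, m14, m23, n24, m43.symm]
          omega
      have hz' : z ∈ ({b1, b2, b3, b4} : Finset V) := by rw [e]; exact hz
      simp only [Finset.mem_insert, Finset.mem_singleton] at hz'
      rcases hz' with rfl | rfl | rfl | rfl
      exacts [⟨2, rfl⟩, ⟨0, rfl⟩, ⟨5, rfl⟩, ⟨1, rfl⟩]
    · rcases h.all hb1 hb3 K z hz with rfl | rfl | rfl | rfl | rfl | rfl | rfl | rfl | rfl | rfl
      exacts [⟨8, rfl⟩, ⟨11, rfl⟩, ⟨7, rfl⟩, ⟨9, rfl⟩, ⟨3, rfl⟩, ⟨4, rfl⟩, ⟨6, rfl⟩, ⟨10, rfl⟩,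
        ⟨0, rfl⟩, ⟨1, rfl⟩]
  have R8 := lk_row hinj 8 7 11 9 4 3 K.Lp (by decide)
  have R11 := lk_row hinj 11 7 8 9 10 6 K.Lq (by decide)
  have R7 := lk_row hinj 7 3 8 11 6 2 K.Lc (by decide)
  have R9 := lk_row hinj 9 4 8 11 10 5 K.Ld (by decide)
  have R3 := lk_row hinj 3 2 7 8 4 0 K.Lr1 (by decide)
  have R4 := lk_row hinj 4 5 9 8 3 0 K.Lr2 (by decide)
  have R6 := lk_row hinj 6 2 7 11 10 1 K.Ls1 (by decide)
  have R10 := lk_row hinj 10 5 9 11 6 1 K.Ls2 (by decide)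
  have row : ∀ i : Fin 12, i ≠ 0 → i ≠ 1 → i ≠ 2 → i ≠ 5 →
      ∀ j, G.graph.Adj (f i) (f j) ↔ gstarG.Adj i j := by
    intro i h0 h1 h2 h5
    fin_cases i
    · exact absurd rfl h0
    · exact absurd rfl h1
    · exact absurd rfl h2
    · exact R3
    · exact R4
    · exact absurd rfl h5
    · exact R6
    · exact R7
    · exact R8
    · exact R9
    · exact R10
    · exact R11
  have hT : ∀ i j : Fin 12, G.graph.Adj (f i) (f j) → gstarG.Adj i j →
      (G.graph.Adj (f i) (f j) ↔ gstarG.Adj i j) := fun i j h1 h2 => ⟨fun _ => h2, fun _ => h1⟩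
  have hF : ∀ i j : Fin 12, ¬ G.graph.Adj (f i) (f j) → ¬ gstarG.Adj i j →
      (G.graph.Adj (f i) (f j) ↔ gstarG.Adj i j) := fun i j h1 h2 => ⟨fun h => absurd h h1, fun h => absurd h h2⟩
  have key : ∀ i j, G.graph.Adj (f i) (f j) ↔ gstarG.Adj i j := by
    intro i j
    by_cases hi : i ≠ 0 ∧ i ≠ 1 ∧ i ≠ 2 ∧ i ≠ 5
    · exact row i hi.1 hi.2.1 hi.2.2.1 hi.2.2.2 j
    by_cases hj : j ≠ 0 ∧ j ≠ 1 ∧ j ≠ 2 ∧ j ≠ 5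
    · rw [G.graph.adj_comm, gstarG.adj_comm]
      exact row j hj.1 hj.2.1 hj.2.2.1 hj.2.2.2 i
    have hd : ∀ i : Fin 12, ¬ (i ≠ 0 ∧ i ≠ 1 ∧ i ≠ 2 ∧ i ≠ 5) → i = 0 ∨ i = 1 ∨ i = 2 ∨ i = 5 := by
      decide
    have hi' := hd i hi
    have hj' := hd j hj
    have irr : ∀ a, ¬ G.graph.Adj a a := fun a => G.graph.loopless.irrefl a
    rcases hi' with rfl | rfl | rfl | rfl <;> rcases hj' with rfl | rfl | rfl | rfl
    · exact hF _ _ (irr _) (by decide)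
    · exact hF _ _ x24 (by decide)
    · exact hT _ _ a12.symm (by decide)
    · exact hT _ _ a23 (by decide)
    · exact hF _ _ (fun h => x24 h.symm) (by decide)
    · exact hF _ _ (irr _) (by decide)
    · exact hT _ _ a14.symm (by decide)
    · exact hT _ _ a43 (by decide)
    · exact hT _ _ a12 (by decide)
    · exact hT _ _ a14 (by decide)
    · exact hF _ _ (irr _) (by decide)
    · exact hF _ _ x13 (by decide)
    · exact hT _ _ a23.symm (by decide)
    · exact hT _ _ a43.symm (by decide)
    · exact hF _ _ (fun h => x13 h.symm) (by decide)
    · exact hF _ _ (irr _) (by decide)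
  have iso : gstarG ≃g G.graph :=
    { Equiv.ofBijective f ⟨hinj, hsurj⟩ with
      map_rel_iff' := fun {i j} => key i j }
  exact ⟨iso.symm⟩

/-- If `G` belongs to `G(2,n)` and is internally 6a-connected, then `G`
is isomorphic to `G*` (the icosahedron minus an edge); in particular `n = 6` and every
interior vertex of `G` has degree 5. -/
theorem stmt_11 {V : Type} [Fintype V] [DecidableEq V] (G : AGraph V) (n : ℕ)
    (h2n : InFamilyG G 2 n) (hconn : Internally6aConnected G) :
    Nonempty (G.graph ≃g gstarG) ∧ n = 6 ∧
      ∀ w ∈ interiorFinset G, vdeg G.graph w = 5 := by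
  obtain ⟨p, q, hpq, hp, hq, pB, qB, hR, hcard⟩ := fam G n h2n
  have h := getCy G hconn hpq hp hq pB qB hR
  obtain ⟨iso⟩ := final_iso G h
  refine ⟨⟨iso⟩, ?_, ?_⟩
  · have h1 := int_card G
    have h2 := Fintype.card_congr iso.toEquiv
    rw [Fintype.card_fin] at h2
    omega
  · intro w hw
    rw [vdeg, dd_eq]
    exact (main_count G hconn hpq hp hq pB qB hR w ((mem_int G w).1 hw)).1
end

section
/- Let G be an a-graph with boundary cycle uxvy for the exterior 4-face and let c be a proper 4-coloring of G with c(x) = 1, c(y) ∈ {1, 2}, c(u) = 3, and c(v) ∈ {3, 4}. Then either there is a path between x and y all of whose vertices are colored 1 or 2, or there is a path between u and v all of whose vertices are colored 3 or 4. -/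
open SimpleGraph

theorem aux_extend {V : Type} {G : SimpleGraph V} {P : V → Prop} {r a w : V}
    (h : ∃ p : G.Walk r a, ∀ z ∈ p.support, P z) (hw : P w) (haw : G.Adj a w) :
    ∃ p : G.Walk r w, ∀ z ∈ p.support, P z := by
  obtain ⟨p, hp⟩ := h
  refine ⟨p.concat haw, fun z hz => ?_⟩
  rw [SimpleGraph.Walk.support_concat] at hz
  simp only [List.concat_eq_append, List.mem_append, List.mem_singleton] at hz
  rcases hz with hz | rfl
  · exact hp z hz
  · exact hw

theorem aux_refl {V : Type} {G : SimpleGraph V} {P : V → Prop} {r : V} (hr : P r) :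
    ∃ p : G.Walk r r, ∀ z ∈ p.support, P z :=
  ⟨SimpleGraph.Walk.nil, fun z hz => by
    simp only [SimpleGraph.Walk.support_nil, List.mem_singleton] at hz
    rwa [hz]⟩

theorem aux_end {V : Type} {G : SimpleGraph V} {P : V → Prop} {r a : V}
    (h : ∃ p : G.Walk r a, ∀ z ∈ p.support, P z) : P a := by
  obtain ⟨p, hp⟩ := h
  exact hp a p.end_mem_support

theorem stmt_12 {V : Type} [Fintype V] [DecidableEq V] (G : AGraph V)
    (c : V → Fin 4) (hc : IsProper4Coloring G.graph c)
    (hx : c G.x = 0) (hy : c G.y = 0 ∨ c G.y = 1)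
    (hu : c G.u = 2) (hv : c G.v = 2 ∨ c G.v = 3) :
    (∃ p : G.graph.Walk G.x G.y, ∀ w ∈ p.support, c w = 0 ∨ c w = 1) ∨
    (∃ p : G.graph.Walk G.u G.v, ∀ w ∈ p.support, c w = 2 ∨ c w = 3) := by
  classical
  by_contra hcon
  rw [not_or] at hcon
  obtain ⟨hyS, hvT⟩ := hcon
  have hcol : ∀ w, (c w = 0 ∨ c w = 1) ∨ (c w = 2 ∨ c w = 3) := by
    intro w; generalize c w = k; revert k; decide
  have hdis : ∀ w, (c w = 0 ∨ c w = 1) → (c w = 2 ∨ c w = 3) → False := by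
    intro w; generalize c w = k; revert k; decide
  obtain ⟨S, hS⟩ : ∃ S : Finset V, ∀ w, w ∈ S ↔
      ∃ p : G.graph.Walk G.x w, ∀ z ∈ p.support, c z = 0 ∨ c z = 1 :=
    ⟨Finset.univ.filter fun w => ∃ p : G.graph.Walk G.x w, ∀ z ∈ p.support, c z = 0 ∨ c z = 1,
      fun w => by simp⟩
  obtain ⟨T, hT⟩ : ∃ T : Finset V, ∀ w, w ∈ T ↔
      ∃ p : G.graph.Walk G.u w, ∀ z ∈ p.support, c z = 2 ∨ c z = 3 :=
    ⟨Finset.univ.filter fun w => ∃ p : G.graph.Walk G.u w, ∀ z ∈ p.support, c z = 2 ∨ c z = 3,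
      fun w => by simp⟩
  rw [← hS] at hyS
  rw [← hT] at hvT
  have hxS : G.x ∈ S := (hS _).2 (aux_refl (P := fun z => c z = 0 ∨ c z = 1) (Or.inl hx))
  have huT : G.u ∈ T := (hT _).2 (aux_refl (P := fun z => c z = 2 ∨ c z = 3) (Or.inl hu))
  have hS1 : ∀ w ∈ S, c w = 0 ∨ c w = 1 := fun w hw =>
    aux_end (P := fun z => c z = 0 ∨ c z = 1) ((hS w).1 hw)
  have hT1 : ∀ w ∈ T, c w = 2 ∨ c w = 3 := fun w hw =>
    aux_end (P := fun z => c z = 2 ∨ c z = 3) ((hT w).1 hw)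
  have hS2 : ∀ a ∈ S, ∀ w, (c w = 0 ∨ c w = 1) → G.graph.Adj a w → w ∈ S := fun a ha w hw h =>
    (hS w).2 (aux_extend (P := fun z => c z = 0 ∨ c z = 1) ((hS a).1 ha) hw h)
  have hT2 : ∀ a ∈ T, ∀ w, (c w = 2 ∨ c w = 3) → G.graph.Adj a w → w ∈ T := fun a ha w hw h =>
    (hT w).2 (aux_extend (P := fun z => c z = 2 ∨ c z = 3) ((hT a).1 ha) hw h)
  have hST : Disjoint S T := Finset.disjoint_left.2 fun w h1 h2 => hdis w (hS1 w h1) (hT1 w h2)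
  set E : Finset (V × V) := (S ×ˢ T).filter fun p => G.graph.Adj p.1 p.2 with hE
  have key := Finset.sum_card_bipartiteAbove_eq_sum_card_bipartiteBelow
    (s := E) (t := G.faces) (fun p f => p.1 ∈ f ∧ p.2 ∈ f)
  unfold Finset.bipartiteAbove Finset.bipartiteBelow at key
  have hR : Even (∑ f ∈ G.faces, (E.filter fun p => p.1 ∈ f ∧ p.2 ∈ f).card) := by
    apply Finset.even_sum
    intro f hf
    have h1 : (E.filter fun p => p.1 ∈ f ∧ p.2 ∈ f) = (f ∩ S) ×ˢ (f ∩ T) := by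
      ext ⟨a, b⟩
      simp only [hE, Finset.mem_filter, Finset.mem_product, Finset.mem_inter]
      constructor
      · rintro ⟨⟨⟨h1, h2⟩, h3⟩, h4, h5⟩
        exact ⟨⟨h4, h1⟩, h5, h2⟩
      · rintro ⟨⟨h4, h1⟩, h5, h2⟩
        refine ⟨⟨⟨h1, h2⟩, G.faces_adj f hf a h4 b h5 ?_⟩, h4, h5⟩
        rintro rfl
        exact hdis a (hS1 a h1) (hT1 a h2)
    rw [h1, Finset.card_product]
    by_cases hs : (f ∩ S).Nonempty
    · by_cases ht : (f ∩ T).Nonempty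
      · obtain ⟨a, ha⟩ := hs
        obtain ⟨b, hb⟩ := ht
        have h3 : (f ∩ S).card + (f ∩ T).card = 3 := by
          rw [← G.faces_card f hf, ← Finset.card_union_of_disjoint
            (hST.mono Finset.inter_subset_right Finset.inter_subset_right),
            ← Finset.inter_union_distrib_left]
          congr 1
          rw [Finset.inter_eq_left]
          intro w hw
          rw [Finset.mem_inter] at ha hb
          rw [Finset.mem_union]
          rcases hcol w with h | h
          · left
            by_cases e : a = w
            · exact e ▸ ha.2
            · exact hS2 a ha.2 w h (G.faces_adj f hf a ha.1 w hw e)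
          · right
            by_cases e : b = w
            · exact e ▸ hb.2
            · exact hT2 b hb.2 w h (G.faces_adj f hf b hb.1 w hw e)
        rw [Nat.even_mul, Nat.even_iff, Nat.even_iff]
        omega
      · rw [Finset.not_nonempty_iff_eq_empty.1 ht]; simp
    · rw [Finset.not_nonempty_iff_eq_empty.1 hs]; simp
  have hmem : (G.x, G.u) ∈ E := by
    simp only [hE, Finset.mem_filter, Finset.mem_product]
    exact ⟨⟨hxS, huT⟩, G.adj_ux.symm⟩
  have hL : ¬ Even (∑ p ∈ E, (G.faces.filter fun f => p.1 ∈ f ∧ p.2 ∈ f).card) := by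
    rw [← Finset.add_sum_erase _ _ hmem]
    have h1 : (G.faces.filter fun f => G.x ∈ f ∧ G.u ∈ f).card = 1 := by
      rw [G.edge_faces _ _ G.adj_ux.symm, if_pos]
      simp [Finset.pair_comm]
    have h2 : Even (∑ p ∈ E.erase (G.x, G.u),
        (G.faces.filter fun f => p.1 ∈ f ∧ p.2 ∈ f).card) := by
      apply Finset.even_sum
      rintro ⟨a, b⟩ hab
      simp only [hE, Finset.mem_erase, Finset.mem_filter, Finset.mem_product] at hab
      obtain ⟨hne, ⟨ha, hb⟩, hadj⟩ := hab
      have hxT : G.x ∉ T := fun h => hdis _ (Or.inl hx) (hT1 _ h)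
      have hyT : G.y ∉ T := fun h => hdis _ hy (hT1 _ h)
      have huS : G.u ∉ S := fun h => hdis _ (hS1 _ h) (Or.inl hu)
      have hvS : G.v ∉ S := fun h => hdis _ (hS1 _ h) hv
      dsimp only
      rw [G.edge_faces _ _ hadj, if_neg]
      · exact even_two
      · intro h
        have h' : s(a, b) = s(G.u, G.x) ∨ s(a, b) = s(G.x, G.v) ∨ s(a, b) = s(G.v, G.y) ∨
            s(a, b) = s(G.y, G.u) := by
          simp only [Finset.mem_insert, Finset.mem_singleton] at h
          have conv : ∀ p q : V, ({a, b} : Finset V) = {p, q} → s(a, b) = s(p, q) := by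
            intro p q e
            have e1 : a ∈ ({p, q} : Finset V) := by rw [← e]; simp
            have e2 : b ∈ ({p, q} : Finset V) := by rw [← e]; simp
            have e3 : p ∈ ({a, b} : Finset V) := by rw [e]; simp
            have e4 : q ∈ ({a, b} : Finset V) := by rw [e]; simp
            simp only [Finset.mem_insert, Finset.mem_singleton] at e1 e2 e3 e4
            rw [Sym2.eq_iff]
            grind
          rcases h with h | h | h | h
          · exact Or.inl (conv _ _ h)
          · exact Or.inr (Or.inl (conv _ _ h))
          · exact Or.inr (Or.inr (Or.inl (conv _ _ h)))
          · exact Or.inr (Or.inr (Or.inr (conv _ _ h)))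
        simp only [Sym2.eq_iff] at h'
        have hne' : ¬ (a = G.x ∧ b = G.u) := fun e => hne (by rw [e.1, e.2])
        grind
    dsimp only
    rw [h1, Nat.even_add]
    simp [h2]
  exact hL (key ▸ hR)
end

section
/- The parented a-graph G*_xy (the order-12 a-graph G* obtained by deleting the edge uv of the icosahedron, with the pair (x,y) of opposite boundary vertices designated) belongs to the family A*: its set of coloring states partitions under Kempe exchanges into exactly two equivalence classes, an n class consisting of 6 non-solution states (states with c(x) = c(y)) and an s class consisting of 12 solution states (states with c(x) ≠ c(y)); in particular no class contains both a solution and a non-solution state. -/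
open SimpleGraph

/-- Boolean adjacency of `G*`. -/
def adjB (a b : Fin 12) : Bool :=
  ([(0, 2), (0, 3), (0, 4), (0, 5), (1, 2), (2, 3), (3, 4), (4, 5), (5, 1),
    (11, 6), (11, 7), (11, 8), (11, 9), (11, 10), (6, 7), (7, 8), (8, 9), (9, 10), (10, 6),
    (1, 6), (1, 10), (2, 6), (2, 7), (3, 7), (3, 8), (4, 8), (4, 9), (5, 9), (5, 10)] :
    List (Fin 12 × Fin 12)).any fun p => (p.1 == a && p.2 == b) || (p.1 == b && p.2 == a)

theorem adj_iff (a b : Fin 12) : gstarG.Adj a b ↔ adjB a b = true := by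
  have h : gstarG.Adj a b ↔ ((s(a, b) ∈ ([s(0, 1), s(0, 2), s(0, 3), s(0, 4), s(0, 5),
     s(1, 2), s(2, 3), s(3, 4), s(4, 5), s(5, 1),
     s(11, 6), s(11, 7), s(11, 8), s(11, 9), s(11, 10),
     s(6, 7), s(7, 8), s(8, 9), s(9, 10), s(10, 6),
     s(1, 6), s(1, 10), s(2, 6), s(2, 7), s(3, 7),
     s(3, 8), s(4, 8), s(4, 9), s(5, 9), s(5, 10)] : List (Sym2 (Fin 12))) ∧ a ≠ b) ∧
      ¬ s(a, b) = s(0, 1)) := by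
    unfold gstarG icosG
    rw [SimpleGraph.deleteEdges_adj, SimpleGraph.fromEdgeSet_adj]
    simp only [Set.mem_insert_iff, Set.mem_singleton_iff, List.mem_cons, List.not_mem_nil, or_false]
  rw [h]
  clear h
  revert a b
  decide +kernel

/-- Representatives of the non-solution states, with colors 0, 1, 2 on the triangle 0, 2, 3. -/
def nList : List (Fin 12 → Fin 4) :=
  [![0,0,1,2,3,1,2,3,0,2,3,1],
   ![0,0,1,2,3,1,2,3,1,2,3,0],
   ![0,2,1,2,3,1,0,3,0,2,3,1],
   ![0,2,1,2,3,1,0,3,1,0,3,2],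
   ![0,3,1,2,3,1,2,0,1,2,0,3],
   ![0,3,1,2,3,1,2,3,0,2,0,1]]

/-- Representatives of the solution states. -/
def sList : List (Fin 12 → Fin 4) :=
  [![0,0,1,2,1,2,2,0,3,0,3,1],
   ![0,0,1,2,1,2,3,0,3,0,1,2],
   ![0,0,1,2,1,3,3,0,3,0,1,2],
   ![0,0,1,2,1,3,3,0,3,0,2,1],
   ![0,0,1,2,3,2,2,0,1,0,1,3],
   ![0,0,1,2,3,2,3,0,1,0,1,2],
   ![0,2,1,2,1,3,3,0,3,0,1,2],
   ![0,2,1,2,1,3,3,0,3,2,0,1],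
   ![0,3,1,2,1,2,0,3,0,3,1,2],
   ![0,3,1,2,1,2,2,3,0,3,0,1],
   ![0,3,1,2,3,2,0,3,1,0,1,2],
   ![0,3,1,2,3,2,2,0,1,0,1,3]]

/-- A tree of Kempe exchanges in the n class. -/
def nTree : List (Fin 12 → Fin 4) :=
  [![0,0,1,2,3,1,2,3,0,2,3,1],
   ![1,1,0,2,3,0,2,3,0,2,3,1],
   ![0,0,1,2,3,1,2,3,1,2,3,0],
   ![2,0,1,0,3,1,2,3,2,0,3,1],
   ![0,2,1,2,3,1,0,3,0,2,3,1],
   ![3,0,1,2,0,1,2,0,3,2,3,1],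
   ![0,3,1,2,3,1,2,3,0,2,0,1],
   ![1,1,0,2,3,0,2,3,1,2,3,0],
   ![2,1,0,1,3,0,2,3,0,2,3,1],
   ![3,1,0,2,1,0,2,3,0,2,3,1],
   ![0,2,1,2,3,1,0,3,1,0,3,2],
   ![0,3,1,2,3,1,2,0,1,2,0,3],
   ![2,2,1,0,3,1,0,3,2,0,3,1],
   ![3,3,1,2,0,1,2,0,3,2,0,1],
   ![2,2,0,1,3,0,1,3,0,1,3,2],
   ![3,3,0,2,1,0,2,1,0,2,1,3],
   ![3,2,1,0,2,1,0,2,3,0,3,1],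
   ![0,0,2,1,3,2,1,3,0,1,3,2],
   ![0,0,3,2,1,3,2,1,0,2,1,3],
   ![3,3,1,0,2,1,0,2,3,0,2,1],
   ![0,3,1,3,2,1,0,2,0,3,2,1],
   ![0,0,1,3,2,1,3,2,0,3,2,1]]

/-- A tree of Kempe exchanges in the s class. -/
def sTree : List (Fin 12 → Fin 4) :=
  [![0,0,1,2,1,3,3,0,3,0,1,2],
   ![2,0,1,0,1,3,3,2,3,2,1,0],
   ![0,2,1,2,1,3,3,0,3,0,1,2],
   ![0,0,2,1,2,3,3,0,3,0,1,2],
   ![0,0,1,2,1,3,3,0,3,0,2,1],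
   ![0,0,1,3,1,3,2,0,2,0,1,3],
   ![0,0,1,2,1,2,3,0,3,0,1,2],
   ![2,2,1,0,1,3,3,2,3,2,1,0],
   ![1,0,2,0,2,3,3,1,3,0,1,2],
   ![0,0,2,1,2,3,3,0,3,0,2,1],
   ![0,0,2,3,2,3,3,0,1,0,1,2],
   ![0,2,1,2,1,3,3,0,3,2,0,1],
   ![0,0,1,2,1,2,2,0,3,0,3,1],
   ![0,0,1,3,1,2,2,0,2,0,1,3],
   ![3,0,1,2,1,2,3,0,3,0,1,2],
   ![0,3,1,2,1,2,0,3,0,3,1,2],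
   ![0,0,1,2,3,2,3,0,1,0,1,2],
   ![1,1,2,0,2,3,3,1,3,1,0,2],
   ![0,0,2,3,2,1,1,0,1,0,3,2],
   ![0,3,1,2,1,2,2,3,0,3,0,1],
   ![0,0,1,2,3,2,2,0,1,0,1,3],
   ![3,3,1,2,1,2,0,3,0,3,1,2],
   ![0,3,1,2,3,2,0,3,1,0,1,2],
   ![1,1,0,2,0,3,3,1,3,1,0,2],
   ![0,0,3,2,3,1,1,0,1,0,3,2],
   ![0,3,1,2,3,2,2,0,1,0,1,3],
   ![3,3,1,2,1,0,0,3,0,3,1,2]]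

/-- Decidable criterion for a Kempe exchange between `c` and `d`. -/
def StepC (c d : Fin 12 → Fin 4) : Prop :=
  ∃ j k : Fin 4, j ≠ k ∧
    (∀ w, c w ≠ d w → (c w = j ∧ d w = k) ∨ (c w = k ∧ d w = j)) ∧
    (∃ w, c w ≠ d w) ∧ (∃ w, c w = d w ∧ (c w = j ∨ c w = k)) ∧
    (∀ a, c a ≠ d a → ∀ b, adjB a b = true → (c b = j ∨ c b = k) → c b ≠ d b)

instance (c d : Fin 12 → Fin 4) : Decidable (StepC c d) := by
  unfold StepC; infer_instance

theorem closed_of_adj {V : Type} (G : SimpleGraph V) (S U : Set V)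
    (h : ∀ a ∈ U, ∀ b, G.Adj a b → b ∈ S → b ∈ U) (a b : V) (ha : a ∈ U)
    (hr : ReachableWithin G S a b) : b ∈ U := by
  obtain ⟨p, hp⟩ := hr
  induction p with
  | nil => exact ha
  | cons hadj p ih =>
    apply ih
    · apply h _ ha _ hadj
      apply hp
      simp
    · intro w hw
      apply hp
      simp [hw]

theorem adj_of_closed {V : Type} (G : SimpleGraph V) (S U : Set V) (hU : U ⊆ S)
    (h : ∀ a ∈ U, ∀ b, ReachableWithin G S a b → b ∈ U) (a b : V) (ha : a ∈ U)
    (hab : G.Adj a b) (hb : b ∈ S) : b ∈ U := by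
  apply h a ha
  refine ⟨SimpleGraph.Walk.cons hab SimpleGraph.Walk.nil, ?_⟩
  intro w hw
  simp at hw
  rcases hw with rfl | rfl
  · exact hU ha
  · exact hb

theorem StepC.step {c d : Fin 12 → Fin 4} (h : StepC c d) : KempeStep gstarG c d := by
  obtain ⟨j, k, hjk, h1, ⟨w, hw⟩, ⟨z, hz, hz'⟩, h4⟩ := h
  refine ⟨j, k, hjk, {w | c w ≠ d w}, ⟨w, hw⟩, ?_, ?_, ?_, ?_, ?_⟩
  · intro w hw
    rcases h1 w hw with h | h
    · exact Or.inl h.1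
    · exact Or.inr h.1
  · intro he
    have : z ∈ {w | c w ≠ d w} := by rw [he]; exact hz'
    exact this hz
  · intro a ha b hr
    refine closed_of_adj gstarG _ _ ?_ a b ha hr
    intro a ha b hab hb
    exact h4 a ha b ((adj_iff a b).1 hab) hb
  · intro w hw
    rcases h1 w hw with h | h
    · rw [if_pos h.1, h.2]
    · rw [if_neg (by rw [h.1]; exact hjk.symm), h.2]
  · intro w hw
    by_contra h
    exact hw fun h' => h h'.symm

theorem KempeStep.symm' {V : Type} {G : SimpleGraph V} {c d : V → Fin 4}
    (h : KempeStep G c d) : KempeStep G d c := by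
  obtain ⟨j, k, hjk, U, hne, hsub, hneq, hcl, hin, hout⟩ := h
  have hS : {w | d w = j ∨ d w = k} = {w | c w = j ∨ c w = k} := by
    ext w
    by_cases hw : w ∈ U
    · have h1 := hsub hw
      have h2 := hin w hw
      simp only [Set.mem_ofPred_eq] at h1 ⊢
      constructor
      · intro _; exact h1
      · intro _; rw [h2]; split_ifs <;> simp
    · simp only [Set.mem_ofPred_eq, hout w hw]
  refine ⟨j, k, hjk, U, hne, ?_, ?_, ?_, ?_, ?_⟩
  · rw [hS]; exact hsub
  · rw [hS]; exact hneq
  · rw [hS]; exact hcl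
  · intro w hw
    have h2 := hin w hw
    rcases hsub hw with h1 | h1
    · rw [if_pos h1] at h2
      rw [h1, h2, if_neg hjk.symm]
    · rw [if_neg (by rw [h1]; exact hjk.symm)] at h2
      rw [h1, h2, if_pos rfl]
  · intro w hw
    exact (hout w hw).symm

theorem KempeStep.perm {V : Type} {G : SimpleGraph V} {c d : V → Fin 4} (σ : Equiv.Perm (Fin 4))
    (h : KempeStep G c d) : KempeStep G (σ ∘ c) (σ ∘ d) := by
  obtain ⟨j, k, hjk, U, hne, hsub, hneq, hcl, hin, hout⟩ := h
  have hS : {w | (σ ∘ c) w = σ j ∨ (σ ∘ c) w = σ k} = {w | c w = j ∨ c w = k} := by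
    ext w; simp
  refine ⟨σ j, σ k, fun h => hjk (σ.injective h), U, hne, ?_, ?_, ?_, ?_, ?_⟩
  · rw [hS]; exact hsub
  · rw [hS]; exact hneq
  · rw [hS]; exact hcl
  · intro w hw
    simp only [Function.comp, hin w hw, EmbeddingLike.apply_eq_iff_eq]
    split_ifs <;> rfl
  · intro w hw
    simp only [Function.comp, hout w hw]

theorem KempeEquiv.perm {V : Type} {G : SimpleGraph V} {c d : V → Fin 4} (σ : Equiv.Perm (Fin 4))
    (h : KempeEquiv G c d) : KempeEquiv G (σ ∘ c) (σ ∘ d) := by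
  induction h with
  | rel _ _ h => exact Relation.EqvGen.rel _ _ (h.perm σ)
  | refl _ => exact Relation.EqvGen.refl _
  | symm _ _ _ ih => exact Relation.EqvGen.symm _ _ ih
  | trans _ _ _ _ _ ih1 ih2 => exact Relation.EqvGen.trans _ _ _ ih1 ih2

theorem KempeStep.proper {V : Type} {G : SimpleGraph V} {c d : V → Fin 4}
    (h : KempeStep G c d) (hc : IsProper4Coloring G c) : IsProper4Coloring G d := by
  obtain ⟨j, k, hjk, U, hne, hsub, hneq, hcl, hin, hout⟩ := h
  have key : ∀ a b, G.Adj a b → a ∈ U → d a ≠ d b := by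
    intro a b hab ha
    have hca := hsub ha
    have hne := hc a b hab
    have hda := hin a ha
    by_cases hb : b ∈ U
    · have hcb := hsub hb
      have hdb := hin b hb
      simp only [Set.mem_ofPred_eq] at hca hcb
      rw [hda, hdb]
      rcases hca with h1 | h1 <;> rcases hcb with h2 | h2 <;>
        simp_all [eq_comm]
    · have hnb : ¬ (c b = j ∨ c b = k) := fun h =>
        hb (adj_of_closed G _ U hsub hcl a b ha hab h)
      rw [hda, hout b hb]
      split_ifs
      · intro h; exact hnb (Or.inr h.symm)
      · intro h; exact hnb (Or.inl h.symm)
  intro a b hab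
  by_cases ha : a ∈ U
  · exact key a b hab ha
  · by_cases hb : b ∈ U
    · exact (key b a hab.symm hb).symm
    · rw [hout a ha, hout b hb]; exact hc a b hab

theorem proper_perm {c : Fin 12 → Fin 4} (σ : Equiv.Perm (Fin 4))
    (hc : IsProper4Coloring gstarG c) : IsProper4Coloring gstarG (σ ∘ c) :=
  fun a b hab h => hc a b hab (σ.injective h)

theorem exists_perm : ∀ p q r : Fin 4, p ≠ q → p ≠ r → q ≠ r →
    ∃ σ : Equiv.Perm (Fin 4), σ p = 0 ∧ σ q = 1 ∧ σ r = 2 := by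
  decide +kernel

set_option synthInstance.maxHeartbeats 2000000 in
set_option synthInstance.maxSize 10000 in
set_option maxRecDepth 10000 in
theorem enum_aux : ∀ a4 : Fin 4, a4 ≠ 0 → a4 ≠ 2 → ∀ a7 : Fin 4, a7 ≠ 1 → a7 ≠ 2 →
    ∀ a8 : Fin 4, a8 ≠ 2 → a8 ≠ a4 → a8 ≠ a7 → ∀ a5 : Fin 4, a5 ≠ 0 → a5 ≠ a4 →
    ∀ a9 : Fin 4, a9 ≠ a4 → a9 ≠ a5 → a9 ≠ a8 → ∀ a6 : Fin 4, a6 ≠ 1 → a6 ≠ a7 →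
    ∀ a11 : Fin 4, a11 ≠ a6 → a11 ≠ a7 → a11 ≠ a8 → a11 ≠ a9 →
    ∀ a10 : Fin 4, a10 ≠ a5 → a10 ≠ a6 → a10 ≠ a9 → a10 ≠ a11 →
    ∀ a1 : Fin 4, a1 ≠ 1 → a1 ≠ a5 → a1 ≠ a6 → a1 ≠ a10 →
    (![0, a1, 1, 2, a4, a5, a6, a7, a8, a9, a10, a11] : Fin 12 → Fin 4) ∈ nList ++ sList := by
  decide +kernel

theorem enum_norm (c : Fin 12 → Fin 4) (hc : IsProper4Coloring gstarG c)
    (h0 : c 0 = 0) (h2 : c 2 = 1) (h3 : c 3 = 2) : c ∈ nList ++ sList := by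
  have e : ∀ a b, adjB a b = true → c a ≠ c b := fun a b h => hc a b ((adj_iff a b).2 h)
  have h := enum_aux (c 4) (h0 ▸ e 4 0 rfl) (h3 ▸ e 4 3 rfl) (c 7) (h2 ▸ e 7 2 rfl)
    (h3 ▸ e 7 3 rfl) (c 8) (h3 ▸ e 8 3 rfl) (e 8 4 rfl) (e 8 7 rfl) (c 5) (h0 ▸ e 5 0 rfl)
    (e 5 4 rfl) (c 9) (e 9 4 rfl) (e 9 5 rfl) (e 9 8 rfl) (c 6) (h2 ▸ e 6 2 rfl) (e 6 7 rfl)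
    (c 11) (e 11 6 rfl) (e 11 7 rfl) (e 11 8 rfl) (e 11 9 rfl)
    (c 10) (e 10 5 rfl) (e 10 6 rfl) (e 10 9 rfl) (e 10 11 rfl)
    (c 1) (h2 ▸ e 1 2 rfl) (e 1 5 rfl) (e 1 6 rfl) (e 1 10 rfl)
  have hh : c = ![0, c 1, 1, 2, c 4, c 5, c 6, c 7, c 8, c 9, c 10, c 11] := by
    funext i
    fin_cases i <;> simp [h0, h2, h3]
  rw [hh]
  exact h

theorem exists_norm (c : Fin 12 → Fin 4) (hc : IsProper4Coloring gstarG c) :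
    ∃ σ : Equiv.Perm (Fin 4), σ ∘ c ∈ nList ++ sList := by
  have e : ∀ a b, adjB a b = true → c a ≠ c b := fun a b h => hc a b ((adj_iff a b).2 h)
  obtain ⟨σ, h0, h2, h3⟩ := exists_perm (c 0) (c 2) (c 3) (e 0 2 rfl) (e 0 3 rfl) (e 2 3 rfl)
  exact ⟨σ, enum_norm _ (proper_perm σ hc) h0 h2 h3⟩

theorem ball_of (L : List (Fin 12 → Fin 4)) (P : (Fin 12 → Fin 4) → Prop) [DecidablePred P]
    (h : (L.all fun n => decide (P n)) = true) : ∀ n ∈ L, P n := by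
  simpa using h

theorem nList_eq : ∀ n ∈ nList, n 2 = n 5 := ball_of _ _ (by decide +kernel)
theorem sList_ne : ∀ n ∈ sList, n 2 ≠ n 5 := ball_of _ _ (by decide +kernel)
theorem list_properB : ∀ n ∈ nList ++ sList, ∀ a b, adjB a b = true → n a ≠ n b :=
  ball_of _ _ (by decide +kernel)
theorem list_proper (n : Fin 12 → Fin 4) (h : n ∈ nList ++ sList) : IsProper4Coloring gstarG n :=
  fun a b hab => list_properB n h a b ((adj_iff a b).1 hab)

theorem exists_norm_n (c : Fin 12 → Fin 4) (hc : IsProper4Coloring gstarG c) (h : c 2 = c 5) :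
    ∃ σ : Equiv.Perm (Fin 4), σ ∘ c ∈ nList := by
  obtain ⟨σ, hσ⟩ := exists_norm c hc
  rcases List.mem_append.1 hσ with h1 | h1
  · exact ⟨σ, h1⟩
  · exact absurd (congrArg σ h) (sList_ne _ h1)

theorem exists_norm_s (c : Fin 12 → Fin 4) (hc : IsProper4Coloring gstarG c) (h : c 2 ≠ c 5) :
    ∃ σ : Equiv.Perm (Fin 4), σ ∘ c ∈ sList := by
  obtain ⟨σ, hσ⟩ := exists_norm c hc
  rcases List.mem_append.1 hσ with h1 | h1
  · exact absurd (σ.injective (nList_eq _ h1)) h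
  · exact ⟨σ, h1⟩

/-- Bounded reachability inside a two-colored subgraph. -/
def conn (c : Fin 12 → Fin 4) (j k : Fin 4) (y : Fin 12) : ℕ → Fin 12 → Bool
  | 0, a => a == y
  | n + 1, a => a == y || (List.finRange 12).any fun b =>
      adjB a b && (c b == j || c b == k) && conn c j k y n b

theorem conn_sound (c : Fin 12 → Fin 4) (j k : Fin 4) (U : Set (Fin 12))
    (hU : ∀ a ∈ U, ∀ b, gstarG.Adj a b → (c b = j ∨ c b = k) → b ∈ U) (y : Fin 12) :
    ∀ n a, a ∈ U → conn c j k y n a = true → y ∈ U := by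
  intro n
  induction n with
  | zero =>
    intro a ha h
    simp only [conn, beq_iff_eq] at h
    exact h ▸ ha
  | succ n ih =>
    intro a ha h
    simp only [conn, Bool.or_eq_true, beq_iff_eq, List.any_eq_true, Bool.and_eq_true] at h
    rcases h with h | ⟨b, -, ⟨hab, hb⟩, h⟩
    · exact h ▸ ha
    · exact ih b (hU a ha b ((adj_iff a b).2 hab) hb) h

theorem nList_conn : ∀ n ∈ nList, ∀ j k : Fin 4, j ≠ k → (n 2 = j ∨ n 2 = k) →
    conn n j k 5 4 2 = true ∧ conn n j k 2 4 5 = true :=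
  ball_of _ _ (by decide +kernel)

theorem nstep_norm (c d : Fin 12 → Fin 4) (hc : c ∈ nList) (h : KempeStep gstarG c d) :
    d 2 = d 5 := by
  have he := nList_eq c hc
  obtain ⟨j, k, hjk, U, hne, hsub, hneq, hcl, hin, hout⟩ := h
  have hU : ∀ a ∈ U, ∀ b, gstarG.Adj a b → (c b = j ∨ c b = k) → b ∈ U :=
    fun a ha b hab hb => adj_of_closed gstarG _ U hsub hcl a b ha hab hb
  by_cases h2 : (2 : Fin 12) ∈ U
  · have h5 := conn_sound c j k U hU 5 4 2 h2 (nList_conn c hc j k hjk (hsub h2)).1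
    rw [hin 2 h2, hin 5 h5, he]
  · by_cases h5 : (5 : Fin 12) ∈ U
    · have hj : c 2 = j ∨ c 2 = k := by rw [he]; exact hsub h5
      exact absurd (conn_sound c j k U hU 2 4 5 h5 (nList_conn c hc j k hjk hj).2) h2
    · rw [hout 2 h2, hout 5 h5, he]

theorem nstep (c d : Fin 12 → Fin 4) (hc : IsProper4Coloring gstarG c) (he : c 2 = c 5)
    (h : KempeStep gstarG c d) : d 2 = d 5 := by
  obtain ⟨σ, hσ⟩ := exists_norm_n c hc he
  exact σ.injective (nstep_norm _ _ hσ (h.perm σ))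

theorem equiv_inv (c d : Fin 12 → Fin 4) (h : KempeEquiv gstarG c d) :
    (IsProper4Coloring gstarG c ∧ c 2 = c 5) ↔ (IsProper4Coloring gstarG d ∧ d 2 = d 5) := by
  induction h with
  | rel _ _ h =>
    exact ⟨fun hh => ⟨h.proper hh.1, nstep _ _ hh.1 hh.2 h⟩,
      fun hh => ⟨h.symm'.proper hh.1, nstep _ _ hh.1 hh.2 h.symm'⟩⟩
  | refl _ => exact Iff.rfl
  | symm _ _ _ ih => exact ih.symm
  | trans _ _ _ _ _ ih1 ih2 => exact ih1.trans ih2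

/-- Every element of the list after the first is one exchange away from an earlier one. -/
def treeB : List (Fin 12 → Fin 4) → List (Fin 12 → Fin 4) → Bool
  | _, [] => true
  | S, d :: l => (S.any fun c => decide (StepC c d)) && treeB (d :: S) l

theorem treeB_sound (r : Fin 12 → Fin 4) : ∀ l S : List (Fin 12 → Fin 4),
    (∀ c ∈ S, KempeEquiv gstarG r c) → treeB S l = true → ∀ c ∈ l, KempeEquiv gstarG r c := by
  intro l
  induction l with
  | nil => intro S _ _ c hc; simp at hc
  | cons d l ih =>
    intro S hS h
    simp only [treeB, Bool.and_eq_true, List.any_eq_true, decide_eq_true_eq] at h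
    obtain ⟨⟨c, hc, hcd⟩, h⟩ := h
    have hd : KempeEquiv gstarG r d :=
      Relation.EqvGen.trans _ _ _ (hS c hc) (Relation.EqvGen.rel _ _ hcd.step)
    have hS' : ∀ c ∈ d :: S, KempeEquiv gstarG r c := by
      intro e he
      rcases List.mem_cons.1 he with rfl | he
      · exact hd
      · exact hS e he
    intro e he
    rcases List.mem_cons.1 he with rfl | he
    · exact hd
    · exact ih _ hS' h e he

theorem class_conn (r : Fin 12 → Fin 4) (t L : List (Fin 12 → Fin 4))
    (ht : treeB [r] t = true) (hL : ∀ n ∈ L, n ∈ r :: t)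
    (hs : ∀ p q : Fin 4, (Equiv.swap p q ∘ r) ∈ r :: t) (c : Fin 12 → Fin 4)
    (σ : Equiv.Perm (Fin 4)) (hσ : σ ∘ c ∈ L) : KempeEquiv gstarG r c := by
  have h1 : ∀ n ∈ r :: t, KempeEquiv gstarG r n := by
    intro n hn
    have hr : KempeEquiv gstarG r r := Relation.EqvGen.refl _
    rcases List.mem_cons.1 hn with rfl | hn
    · exact hr
    · exact treeB_sound r t [r] (by simpa using hr) ht n hn
  have h2 : ∀ τ : Equiv.Perm (Fin 4), KempeEquiv gstarG r (τ ∘ r) := by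
    intro τ
    induction τ using Equiv.Perm.swap_induction_on with
    | one => exact Relation.EqvGen.refl _
    | swap_mul f p q _ ih =>
      have := KempeEquiv.perm (Equiv.swap p q) ih
      exact Relation.EqvGen.trans _ _ _ (h1 _ (hs p q)) this
  have h3 := KempeEquiv.perm σ⁻¹ (h1 _ (hL _ hσ))
  have h4 : (σ⁻¹ : Equiv.Perm (Fin 4)) ∘ (σ ∘ c) = c := by
    funext i; simp
  rw [h4] at h3
  exact Relation.EqvGen.trans _ _ _ (h2 _) h3

theorem n_conn (c : Fin 12 → Fin 4) (hc : IsProper4Coloring gstarG c) (h : c 2 = c 5) :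
    KempeEquiv gstarG (nTree.head (by decide)) c := by
  obtain ⟨σ, hσ⟩ := exists_norm_n c hc h
  exact class_conn _ nTree.tail nList (by decide +kernel) (ball_of _ _ (by decide +kernel))
    (by decide +kernel) c σ hσ

theorem s_conn (c : Fin 12 → Fin 4) (hc : IsProper4Coloring gstarG c) (h : c 2 ≠ c 5) :
    KempeEquiv gstarG (sTree.head (by decide)) c := by
  obtain ⟨σ, hσ⟩ := exists_norm_s c hc h
  exact class_conn _ sTree.tail sList (by decide +kernel) (ball_of _ _ (by decide +kernel))
    (by decide +kernel) c σ hσ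

theorem state_perm (c : Fin 12 → Fin 4) (σ : Equiv.Perm (Fin 4)) :
    statePart (σ ∘ c) = statePart c := by
  funext a b
  simp [statePart]

theorem list_injB : ((nList ++ sList).all fun m => (nList ++ sList).all fun n =>
    decide ((∀ a b : Fin 12, m a = m b ↔ n a = n b) → m = n)) = true := by
  decide +kernel

theorem list_inj : ∀ m ∈ nList ++ sList, ∀ n ∈ nList ++ sList,
    (∀ a b : Fin 12, m a = m b ↔ n a = n b) → m = n := by
  have h := list_injB
  simp only [List.all_eq_true, decide_eq_true_eq] at h
  exact h

theorem ncard_class (A : Set (Fin 12 → Fin 4)) (L : List (Fin 12 → Fin 4))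
    (hL : ∀ n ∈ L, n ∈ nList ++ sList) (hA : ∀ n ∈ L, n ∈ A)
    (hn : ∀ c ∈ A, ∃ σ : Equiv.Perm (Fin 4), σ ∘ c ∈ L) :
    (statePart '' A).ncard = L.toFinset.card := by
  have h : statePart '' A = statePart '' (L.toFinset : Set (Fin 12 → Fin 4)) := by
    ext s
    constructor
    · rintro ⟨c, hc, rfl⟩
      obtain ⟨σ, hσ⟩ := hn c hc
      exact ⟨σ ∘ c, by simpa using hσ, state_perm c σ⟩
    · rintro ⟨c, hc, rfl⟩
      exact ⟨c, hA c (by simpa using hc), rfl⟩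
  rw [h, Set.InjOn.ncard_image, Set.ncard_coe_finset]
  intro m hm n hn' he
  refine list_inj m (hL m (by simpa using hm)) n (hL n (by simpa using hn')) ?_
  intro a b
  exact iff_of_eq (congrFun (congrFun he a) b)

/-- The parented a-graph `G*_xy` (icosahedron minus the edge `uv`, with
the pair `(x, y) = (2, 5)` designated) belongs to `A*`: its coloring states split
under Kempe exchanges into exactly two classes, an `n` class of 6 non-solution states
and an `s` class of 12 solution states. -/
theorem stmt_14 :
    (∃ A B : Set (Fin 12 → Fin 4),
      (∀ c ∈ A, IsProper4Coloring gstarG c) ∧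
      (∀ c ∈ B, IsProper4Coloring gstarG c) ∧
      (∀ c : Fin 12 → Fin 4, IsProper4Coloring gstarG c → c ∈ A ∨ c ∈ B) ∧
      (∀ c ∈ A, c ∉ B) ∧
      (∀ c ∈ A, ∀ c' ∈ A, KempeEquiv gstarG c c') ∧
      (∀ c ∈ B, ∀ c' ∈ B, KempeEquiv gstarG c c') ∧
      (∀ c ∈ A, ∀ c' ∈ B, ¬ KempeEquiv gstarG c c') ∧
      (∀ c ∈ A, c gstarX = c gstarY) ∧
      (∀ c ∈ B, c gstarX ≠ c gstarY) ∧
      (statePart '' A).ncard = 6 ∧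
      (statePart '' B).ncard = 12) ∧
    NoNSClass gstarG gstarX gstarY := by 
  constructor
  · refine ⟨{c | IsProper4Coloring gstarG c ∧ c 2 = c 5},
      {c | IsProper4Coloring gstarG c ∧ c 2 ≠ c 5}, fun c h => h.1, fun c h => h.1, ?_,
      fun c h h' => h'.2 h.2, ?_, ?_, ?_, fun c h => h.2, fun c h => h.2, ?_, ?_⟩
    · intro c hc
      by_cases h : c 2 = c 5
      · exact Or.inl ⟨hc, h⟩
      · exact Or.inr ⟨hc, h⟩
    · intro c h c' h'
      exact Relation.EqvGen.trans _ _ _ (Relation.EqvGen.symm _ _ (n_conn c h.1 h.2))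
        (n_conn c' h'.1 h'.2)
    · intro c h c' h'
      exact Relation.EqvGen.trans _ _ _ (Relation.EqvGen.symm _ _ (s_conn c h.1 h.2))
        (s_conn c' h'.1 h'.2)
    · intro c h c' h' he
      exact h'.2 ((equiv_inv c c' he).1 h).2
    · rw [ncard_class {c | IsProper4Coloring gstarG c ∧ c 2 = c 5} nList (fun n h => List.mem_append_left _ h)
        (fun n h => ⟨list_proper n (List.mem_append_left _ h), nList_eq n h⟩)
        (fun c h => exists_norm_n c h.1 h.2)]
      decide +kernel
    · rw [ncard_class {c | IsProper4Coloring gstarG c ∧ c 2 ≠ c 5} sList (fun n h => List.mem_append_right _ h)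
        (fun n h => ⟨list_proper n (List.mem_append_right _ h), sList_ne n h⟩)
        (fun c h => exists_norm_s c h.1 h.2)]
      decide +kernel
  · intro c c' hc hc' h
    have := equiv_inv c c' h
    exact ⟨fun e => (this.1 ⟨hc, e⟩).2, fun e => (this.2 ⟨hc', e⟩).2⟩
end
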